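/- In the nonlinear setting with standing conditions (N1)–(N5): lim_{n→∞} H_{h_n}(J_n) = 1. -/

import Mathlib

open Set Filter MeasureTheory Topology

noncomputable section

/-- Composition `g_{i₁} ∘ g_{i₂} ∘ ⋯ ∘ g_{i_l}` along a finite word. -/
def wordComp (g : ℕ → ℝ → ℝ) : List ℕ → ℝ → ℝ
  | [] => id
  | k :: w => g k ∘ wordComp g w

/-- The limit set `J_n` of the IFS `S_n = {g_1, …, g_n}`. -/
def limitSet (g : ℕ → ℝ → ℝ) (n : ℕ) : Set ℝ :=
  ⋂ l : ℕ, ⋃ w ∈ {w : List ℕ | w.length = l + 1 ∧ ∀ i ∈ w, 1 ≤ i ∧ i ≤ n},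
    wordComp g w '' Set.Icc (0 : ℝ) 1

/-- The distortion `κ(g) = sup_{x,y ∈ [0,1]} |g′(y)|/|g′(x)|` of a map with derivative `f'`. -/
def distortion (f' : ℝ → ℝ) : ℝ :=
  ⨆ x ∈ Set.Icc (0 : ℝ) 1, ⨆ y ∈ Set.Icc (0 : ℝ) 1, |f' y| / |f' x|

/-- The nonlinear setting of the paper: a strictly decreasing sequence `b_k → 0` with `b_0 = 1`,
    decreasing `C²` diffeomorphisms `g_k : [0,1] → [b_k, b_{k-1}]` (with first and second
    derivatives `g'` and `g''`), the Hausdorff dimensions `h_n` of the limit sets `J_n`, and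
    the standing conditions (N1)–(N5). -/
structure NonlinearIFS where
  b : ℕ → ℝ
  g : ℕ → ℝ → ℝ
  g' : ℕ → ℝ → ℝ
  g'' : ℕ → ℝ → ℝ
  h : ℕ → ℝ
  b_zero : b 0 = 1
  b_anti : StrictAnti b
  b_lim : Filter.Tendsto b Filter.atTop (nhds 0)
  g_image : ∀ k, 1 ≤ k → g k '' Set.Icc (0 : ℝ) 1 = Set.Icc (b k) (b (k - 1))
  g_anti : ∀ k, 1 ≤ k → StrictAntiOn (g k) (Set.Icc (0 : ℝ) 1)
  g_zero : ∀ k, 1 ≤ k → g k 0 = b (k - 1)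
  g_one : ∀ k, 1 ≤ k → g k 1 = b k
  deriv1 : ∀ k, 1 ≤ k → ∀ x ∈ Set.Icc (0 : ℝ) 1, HasDerivAt (g k) (g' k x) x
  deriv2 : ∀ k, 1 ≤ k → ∀ x ∈ Set.Icc (0 : ℝ) 1, HasDerivAt (g' k) (g'' k x) x
  deriv_ne : ∀ k, 1 ≤ k → ∀ x ∈ Set.Icc (0 : ℝ) 1, g' k x ≠ 0
  h_dim : ∀ n, 1 ≤ n → dimH (limitSet g n) = ENNReal.ofReal (h n)
  N1 : Filter.Tendsto (fun n : ℕ => (1 - h n) * Real.log n) Filter.atTop (nhds 0)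
  N2 : Filter.Tendsto (fun n : ℕ => ⨆ k ∈ Set.Ici n, b k / b (k + 1)) Filter.atTop (nhds 1)
  N3 : ∃ c : ℝ, 0 < c ∧ ∀ n, 1 ≤ n → ∀ x ∈ Set.Icc (0 : ℝ) 1, |g'' n x / g' n x| < c
  N4 : Filter.Tendsto (fun n : ℕ => distortion (g' n)) Filter.atTop (nhds 1)
  N5 : ∃ α : ℝ, α < 1 ∧ ∀ n, 1 ≤ n → ∀ x ∈ Set.Icc (0 : ℝ) 1, |g' n x| < α

/-- The normalized Hausdorff measure `m_n(A) = H_{h_n}(A ∩ J_n)/H_{h_n}(J_n)`. -/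
def normMeas (S : NonlinearIFS) (n : ℕ) (A : Set ℝ) : ENNReal :=
  μH[S.h n] (A ∩ limitSet S.g n) / μH[S.h n] (limitSet S.g n)

section Part1

/-- bounded distortion of `f` on `I` -/
def DistOn (f : ℝ → ℝ) (I : Set ℝ) (κ : ℝ) : Prop :=
  ∀ x ∈ I, ∀ y ∈ I, ∀ u ∈ I, ∀ v ∈ I, |f x - f y| * |u - v| ≤ κ * (|f u - f v| * |x - y|)

theorem DistOn.mono {f : ℝ → ℝ} {I I' : Set ℝ} {κ κ' : ℝ} (h : DistOn f I κ) (hI : I' ⊆ I)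
    (hk : κ ≤ κ') : DistOn f I' κ' := fun x hx y hy u hu v hv =>
  (h x (hI hx) y (hI hy) u (hI hu) v (hI hv)).trans
    (mul_le_mul_of_nonneg_right hk (by positivity))

theorem DistOn.comp {f g : ℝ → ℝ} {I I' : Set ℝ} {κ κ' : ℝ} (hf : DistOn f I' κ)
    (hg : DistOn g I κ') (hm : MapsTo g I I') (hi : InjOn g I) (hk : 0 ≤ κ) :
    DistOn (f ∘ g) I (κ * κ') := by
  intro x hx y hy u hu v hv
  by_cases hxy : x = y
  · subst hxy; simp
  by_cases huv : u = v
  · subst huv; simp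
  have h1 := hf _ (hm hx) _ (hm hy) _ (hm hu) _ (hm hv)
  have h2 := hg x hx y hy u hu v hv
  have p1 : 0 < |g x - g y| := abs_pos.2 (sub_ne_zero.2 fun h => hxy (hi hx hy h))
  have p2 : 0 < |g u - g v| := abs_pos.2 (sub_ne_zero.2 fun h => huv (hi hu hv h))
  have p3 : 0 ≤ |f (g x) - f (g y)| := abs_nonneg _
  have p4 : 0 ≤ |f (g u) - f (g v)| := abs_nonneg _
  have p5 : 0 ≤ |u - v| := abs_nonneg _
  have p6 : 0 ≤ |x - y| := abs_nonneg _
  simp only [Function.comp]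
  have h3 : (|f (g x) - f (g y)| * |u - v|) * (|g u - g v| * |g x - g y|)
      ≤ (κ * κ' * (|f (g u) - f (g v)| * |x - y|)) * (|g u - g v| * |g x - g y|) := by
    calc _ = (|f (g x) - f (g y)| * |g u - g v|) * (|g x - g y| * |u - v|) := by ring
      _ ≤ (κ * (|f (g u) - f (g v)| * |g x - g y|)) * (κ' * (|g u - g v| * |x - y|)) := by
          apply mul_le_mul h1 h2 (by positivity) (by positivity)
      _ = _ := by ring
  exact le_of_mul_le_mul_right h3 (by positivity)

namespace NonlinearIFS
variable (S : NonlinearIFS)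

theorem b_pos (k : ℕ) : 0 < S.b k := by
  have h1 : S.b (k+1) < S.b k := S.b_anti (Nat.lt_succ_self k)
  have h2 : 0 ≤ S.b (k+1) := S.b_anti.antitone.le_of_tendsto S.b_lim (k+1)
  linarith

theorem b_le_one (k : ℕ) : S.b k ≤ 1 := by
  rw [← S.b_zero]; exact S.b_anti.antitone (Nat.zero_le k)

theorem b_mem (k : ℕ) : S.b k ∈ Icc (0:ℝ) 1 := ⟨(S.b_pos k).le, S.b_le_one k⟩

theorem g_mem {k : ℕ} (hk : 1 ≤ k) {x : ℝ} (hx : x ∈ Icc (0:ℝ) 1) :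
    S.g k x ∈ Icc (S.b k) (S.b (k-1)) := by
  rw [← S.g_image k hk]; exact mem_image_of_mem _ hx

theorem g_mem01 {k : ℕ} (hk : 1 ≤ k) : MapsTo (S.g k) (Icc (0:ℝ) 1) (Icc (0:ℝ) 1) := fun x hx => by
  have := S.g_mem hk hx
  exact ⟨(S.b_pos k).le.trans this.1, this.2.trans (S.b_le_one _)⟩

theorem g_cont {k : ℕ} (hk : 1 ≤ k) : ContinuousOn (S.g k) (Icc (0:ℝ) 1) := fun x hx =>
  (S.deriv1 k hk x hx).continuousAt.continuousWithinAt

theorem mvt {k : ℕ} (hk : 1 ≤ k) {p q : ℝ} (hp : 0 ≤ p) (hq : q ≤ 1) {x y : ℝ} (hx : x ∈ Icc p q)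
    (hy : y ∈ Icc p q) : ∃ z ∈ Icc p q, |S.g k x - S.g k y| = |S.g' k z| * |x - y| := by
  wlog hxy : x < y generalizing x y
  · rcases (not_lt.1 hxy).eq_or_lt with h | h
    · exact ⟨x, hx, by simp [h]⟩
    · obtain ⟨z, hz, h⟩ := this hy hx h
      exact ⟨z, hz, by rw [abs_sub_comm, h, abs_sub_comm x]⟩
  have sub : Icc x y ⊆ Icc (0:ℝ) 1 := Icc_subset_Icc (hp.trans hx.1) (hy.2.trans hq)
  obtain ⟨z, hz, h⟩ := exists_hasDerivAt_eq_slope (S.g k) (S.g' k) hxy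
    ((S.g_cont hk).mono sub) (fun z hz => S.deriv1 k hk z (sub (Ioo_subset_Icc_self hz)))
  refine ⟨z, ⟨hx.1.trans hz.1.le, hz.2.le.trans hy.2⟩, ?_⟩
  have : y - x ≠ 0 := by linarith
  rw [h, abs_div, abs_sub_comm x y, div_mul_cancel₀ _ (abs_ne_zero.2 this), abs_sub_comm]

/-- chosen constants -/
theorem exists_alpha : ∃ α : ℝ, 0 < α ∧ α < 1 ∧ ∀ n, 1 ≤ n → ∀ x ∈ Set.Icc (0 : ℝ) 1, |S.g' n x| < α := by
  obtain ⟨α, h1, h2⟩ := S.N5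
  exact ⟨α, (abs_nonneg _).trans_lt (h2 1 le_rfl 0 (by simp)), h1, h2⟩

def α : ℝ := S.exists_alpha.choose
theorem α_pos : 0 < S.α := S.exists_alpha.choose_spec.1
theorem α_lt : S.α < 1 := S.exists_alpha.choose_spec.2.1
theorem g'_lt {n : ℕ} (hn : 1 ≤ n) {x : ℝ} (hx : x ∈ Icc (0:ℝ) 1) : |S.g' n x| < S.α :=
  S.exists_alpha.choose_spec.2.2 n hn x hx
def c : ℝ := S.N3.choose
theorem c_pos : 0 < S.c := S.N3.choose_spec.1
theorem N3' {n : ℕ} (hn : 1 ≤ n) {x : ℝ} (hx : x ∈ Icc (0:ℝ) 1) : |S.g'' n x / S.g' n x| < S.c :=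
  S.N3.choose_spec.2 n hn x hx
def C : ℝ := S.c / (1 - S.α)
theorem C_pos : 0 < S.C := div_pos S.c_pos (by linarith [S.α_lt])
def K : ℝ := Real.exp S.C
theorem K_pos : 0 < S.K := Real.exp_pos _
theorem one_le_K : 1 ≤ S.K := Real.one_le_exp S.C_pos.le

theorem g_lip {k : ℕ} (hk : 1 ≤ k) {x y : ℝ} (hx : x ∈ Icc (0:ℝ) 1) (hy : y ∈ Icc (0:ℝ) 1) :
    |S.g k x - S.g k y| ≤ S.α * |x - y| := by
  obtain ⟨z, hz, h⟩ := S.mvt hk le_rfl le_rfl hx hy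
  rw [h]
  exact mul_le_mul_of_nonneg_right (S.g'_lt hk hz).le (abs_nonneg _)

theorem log_deriv {k : ℕ} (hk : 1 ≤ k) {x y : ℝ} (hx : x ∈ Icc (0:ℝ) 1) (hy : y ∈ Icc (0:ℝ) 1) :
    |S.g' k y| ≤ Real.exp (S.c * |y - x|) * |S.g' k x| := by
  have h := (convex_Icc (0:ℝ) 1).norm_image_sub_le_of_norm_hasDerivWithin_le
    (f := fun x => Real.log (S.g' k x)) (f' := fun x => S.g'' k x / S.g' k x) (C := S.c)
    (fun z hz => ((S.deriv2 k hk z hz).log (S.deriv_ne k hk z hz)).hasDerivWithinAt)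
    (fun z hz => (S.N3' hk hz).le) hx hy
  simp only [Real.norm_eq_abs] at h
  have h1 : 0 < |S.g' k x| := abs_pos.2 (S.deriv_ne k hk x hx)
  have h2 : 0 < |S.g' k y| := abs_pos.2 (S.deriv_ne k hk y hy)
  have h3 := (abs_le.1 h).2
  rw [← Real.log_abs, ← Real.log_abs (S.g' k x)] at h3
  calc |S.g' k y| = Real.exp (Real.log |S.g' k y|) := (Real.exp_log h2).symm
    _ ≤ Real.exp (S.c * |y - x| + Real.log |S.g' k x|) := Real.exp_le_exp.2 (by linarith)
    _ = _ := by rw [Real.exp_add, Real.exp_log h1]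

theorem dist_g_of {k : ℕ} (hk : 1 ≤ k) {p q κ : ℝ} (hp : 0 ≤ p) (hq : q ≤ 1)
    (h : ∀ x ∈ Icc p q, ∀ y ∈ Icc p q, |S.g' k y| ≤ κ * |S.g' k x|) :
    DistOn (S.g k) (Icc p q) κ := by
  intro x hx y hy u hu v hv
  obtain ⟨z, hz, h1⟩ := S.mvt hk hp hq hx hy
  obtain ⟨z', hz', h2⟩ := S.mvt hk hp hq hu hv
  rw [h1, h2]
  calc _ = |S.g' k z| * (|x - y| * |u - v|) := by ring
    _ ≤ (κ * |S.g' k z'|) * (|x - y| * |u - v|) :=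
      mul_le_mul_of_nonneg_right (h _ hz' _ hz) (by positivity)
    _ = _ := by ring

theorem dist_g {k : ℕ} (hk : 1 ≤ k) {p q : ℝ} (hp : 0 ≤ p) (hq : q ≤ 1) :
    DistOn (S.g k) (Icc p q) (Real.exp (S.c * (q - p))) := by
  apply S.dist_g_of hk hp hq
  intro x hx y hy
  have sub : Icc p q ⊆ Icc (0:ℝ) 1 := Icc_subset_Icc hp hq
  refine (S.log_deriv hk (sub hx) (sub hy)).trans (mul_le_mul_of_nonneg_right ?_ (abs_nonneg _))
  apply Real.exp_le_exp.2
  apply mul_le_mul_of_nonneg_left _ S.c_pos.le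
  rw [abs_le]; constructor <;> linarith [hx.1, hx.2, hy.1, hy.2]

theorem le_distortion {k : ℕ} (hk : 1 ≤ k) {x y : ℝ} (hx : x ∈ Icc (0:ℝ) 1) (hy : y ∈ Icc (0:ℝ) 1) :
    |S.g' k y| ≤ distortion (S.g' k) * |S.g' k x| := by
  have key : ∀ x ∈ Icc (0:ℝ) 1, ∀ y ∈ Icc (0:ℝ) 1, |S.g' k y| / |S.g' k x| ≤ Real.exp S.c := by
    intro x hx y hy
    rw [div_le_iff₀ (abs_pos.2 (S.deriv_ne k hk x hx))]
    refine (S.log_deriv hk hx hy).trans (mul_le_mul_of_nonneg_right ?_ (abs_nonneg _))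
    apply Real.exp_le_exp.2
    have : |y - x| ≤ 1 := by rw [abs_le]; constructor <;> linarith [hx.1, hx.2, hy.1, hy.2]
    nlinarith [S.c_pos]
  have e0 : 0 ≤ Real.exp S.c := (Real.exp_pos _).le
  have b1 : ∀ x ∈ Icc (0:ℝ) 1, ∀ y, (⨆ (_ : y ∈ Icc (0:ℝ) 1), |S.g' k y| / |S.g' k x|) ≤ Real.exp S.c :=
    fun x hx y => Real.iSup_le (fun hy => key x hx y hy) e0
  have b2 : ∀ x, (⨆ (_ : x ∈ Icc (0:ℝ) 1), ⨆ y ∈ Icc (0:ℝ) 1, |S.g' k y| / |S.g' k x|) ≤ Real.exp S.c :=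
    fun x => Real.iSup_le (fun hx => Real.iSup_le (b1 x hx) e0) e0
  rw [← div_le_iff₀ (abs_pos.2 (S.deriv_ne k hk x hx))]
  unfold distortion
  calc |S.g' k y| / |S.g' k x| = (⨆ (_ : y ∈ Icc (0:ℝ) 1), |S.g' k y| / |S.g' k x|) := by
        rw [ciSup_pos hy]
    _ ≤ ⨆ y ∈ Icc (0:ℝ) 1, |S.g' k y| / |S.g' k x| :=
        le_ciSup (f := fun y => ⨆ (_ : y ∈ Icc (0:ℝ) 1), |S.g' k y| / |S.g' k x|)
          ⟨_, by rintro _ ⟨y, rfl⟩; exact b1 x hx y⟩ y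
    _ = ⨆ (_ : x ∈ Icc (0:ℝ) 1), ⨆ y ∈ Icc (0:ℝ) 1, |S.g' k y| / |S.g' k x| := by
        rw [ciSup_pos hx]
    _ ≤ _ := le_ciSup (f := fun x => ⨆ (_ : x ∈ Icc (0:ℝ) 1), ⨆ y ∈ Icc (0:ℝ) 1, |S.g' k y| / |S.g' k x|)
          ⟨_, by rintro _ ⟨y, rfl⟩; exact b2 y⟩ x

/-- valid words with letters `≥ 1` -/
def W (w : List ℕ) : Prop := ∀ i ∈ w, 1 ≤ i

abbrev f (w : List ℕ) : ℝ → ℝ := wordComp S.g w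

theorem f_append (u v : List ℕ) : S.f (u ++ v) = S.f u ∘ S.f v := by
  induction u with
  | nil => rfl
  | cons k u ih => simp only [f, List.cons_append, wordComp] at *; rw [ih]; rfl

theorem f_snoc (u : List ℕ) (k : ℕ) (x : ℝ) : S.f (u ++ [k]) x = S.f u (S.g k x) := by
  rw [f_append]; rfl

theorem W_snoc {u : List ℕ} (hu : W u) {k : ℕ} (hk : 1 ≤ k) : W (u ++ [k]) := by
  intro i hi; simp at hi; rcases hi with h | h
  · exact hu i h
  · omega

theorem f_maps {w : List ℕ} (hw : W w) : MapsTo (S.f w) (Icc (0:ℝ) 1) (Icc (0:ℝ) 1) := by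
  induction w with
  | nil => exact fun x hx => hx
  | cons k w ih =>
    exact (S.g_mem01 (hw k (by simp))).comp (ih fun i hi => hw i (by simp [hi]))

theorem f_cont {w : List ℕ} (hw : W w) : ContinuousOn (S.f w) (Icc (0:ℝ) 1) := by
  induction w with
  | nil => exact continuousOn_id
  | cons k w ih =>
    have hw' : W w := fun i hi => hw i (by simp [hi])
    exact (S.g_cont (hw k (by simp))).comp (ih hw') (S.f_maps hw')

theorem f_mono {w : List ℕ} (hw : W w) :
    StrictMonoOn (S.f w) (Icc (0:ℝ) 1) ∨ StrictAntiOn (S.f w) (Icc (0:ℝ) 1) := by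
  induction w with
  | nil => left; exact fun x _ y _ h => h
  | cons k w ih =>
    have hw' : W w := fun i hi => hw i (by simp [hi])
    have hg := S.g_anti k (hw k (by simp))
    rcases ih hw' with h | h
    · right; exact fun x hx y hy hxy => hg (S.f_maps hw' hx) (S.f_maps hw' hy) (h hx hy hxy)
    · left; exact fun x hx y hy hxy => hg (S.f_maps hw' hy) (S.f_maps hw' hx) (h hx hy hxy)

theorem f_inj {w : List ℕ} (hw : W w) : InjOn (S.f w) (Icc (0:ℝ) 1) := by
  rcases S.f_mono hw with h | h
  · exact h.injOn
  · exact h.injOn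

theorem f_lip {w : List ℕ} (hw : W w) {x y : ℝ} (hx : x ∈ Icc (0:ℝ) 1) (hy : y ∈ Icc (0:ℝ) 1) :
    |S.f w x - S.f w y| ≤ S.α ^ w.length * |x - y| := by
  induction w with
  | nil => simp [f, wordComp]
  | cons k w ih =>
    have hw' : W w := fun i hi => hw i (by simp [hi])
    have := S.g_lip (hw k (by simp)) (S.f_maps hw' hx) (S.f_maps hw' hy)
    calc _ ≤ S.α * |S.f w x - S.f w y| := this
      _ ≤ S.α * (S.α ^ w.length * |x - y|) := mul_le_mul_of_nonneg_left (ih hw') S.α_pos.le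
      _ = _ := by rw [List.length_cons]; ring

theorem dist_f {w : List ℕ} (hw : W w) {p q : ℝ} (hp : 0 ≤ p) (hq : q ≤ 1) (hpq : p ≤ q) :
    DistOn (S.f w) (Icc p q) (Real.exp (S.C * (q - p))) := by
  have main : DistOn (S.f w) (Icc p q) (Real.exp (S.C * (1 - S.α ^ w.length) * (q - p))) := by
    induction w with
    | nil => intro x hx y hy u hu v hv; simp [f, wordComp, mul_comm]
    | cons k w ih =>
      have hk := hw k (by simp)
      have hw' : W w := fun i hi => hw i (by simp [hi])
      have hsub : Icc p q ⊆ Icc (0:ℝ) 1 := Icc_subset_Icc hp hq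
      have pm : p ∈ Icc (0:ℝ) 1 := hsub ⟨le_rfl, hpq⟩
      have qm : q ∈ Icc (0:ℝ) 1 := hsub ⟨hpq, le_rfl⟩
      have hl := S.f_lip hw' qm pm
      rw [abs_of_nonneg (sub_nonneg.2 hpq)] at hl
      have h1 : 1 - S.α ≠ 0 := by linarith [S.α_lt]
      have e1 : Real.exp (S.c * (S.α ^ w.length * (q - p))) * Real.exp (S.C * (1 - S.α ^ w.length) * (q - p)) =
          Real.exp (S.C * (1 - S.α ^ (k :: w).length) * (q - p)) := by
        rw [← Real.exp_add, List.length_cons]; congr 1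
        unfold C; field_simp; ring
      rw [← e1]
      have aux : ∀ p' q' : ℝ, p' ∈ Icc (0:ℝ) 1 → q' ∈ Icc (0:ℝ) 1 → q' - p' ≤ S.α ^ w.length * (q - p) →
          MapsTo (S.f w) (Icc p q) (Icc p' q') → DistOn (S.g k ∘ S.f w) (Icc p q)
          (Real.exp (S.c * (S.α ^ w.length * (q - p))) * Real.exp (S.C * (1 - S.α ^ w.length) * (q - p))) := by
        intro p' q' hp' hq' hle hm
        refine DistOn.comp ((S.dist_g hk hp'.1 hq'.2).mono le_rfl ?_) (ih hw') hm
          ((S.f_inj hw').mono hsub) (Real.exp_pos _).le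
        exact Real.exp_le_exp.2 (mul_le_mul_of_nonneg_left hle S.c_pos.le)
      rcases S.f_mono hw' with h | h
      · refine aux (S.f w p) (S.f w q) (S.f_maps hw' pm) (S.f_maps hw' qm) ((le_abs_self _).trans hl) ?_
        intro x hx
        exact ⟨h.monotoneOn pm (hsub hx) hx.1, h.monotoneOn (hsub hx) qm hx.2⟩
      · refine aux (S.f w q) (S.f w p) (S.f_maps hw' qm) (S.f_maps hw' pm) ((neg_sub (S.f w q) (S.f w p) ▸ neg_le_abs _).trans hl) ?_
        intro x hx
        exact ⟨h.antitoneOn (hsub hx) qm hx.2, h.antitoneOn pm (hsub hx) hx.1⟩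
  refine main.mono le_rfl (Real.exp_le_exp.2 (mul_le_mul_of_nonneg_right ?_ (by linarith)))
  have := pow_pos S.α_pos w.length
  nlinarith [S.C_pos]

theorem dist_K {w : List ℕ} (hw : W w) : DistOn (S.f w) (Icc 0 1) S.K := by
  have := S.dist_f hw le_rfl le_rfl zero_le_one
  simpa [K] using this

theorem dist_large {κ : ℝ} (hκ : 1 < κ) : ∃ N, ∀ k, N < k → ∀ w, W w →
    DistOn (S.f (w ++ [k])) (Icc 0 1) κ := by
  have h1 : Tendsto (fun k => Real.exp (S.C * (S.b (k-1) - S.b k)) * distortion (S.g' k)) atTop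
      (𝓝 (Real.exp (S.C * (0 - 0)) * 1)) := by
    refine Tendsto.mul ?_ S.N4
    refine (Real.continuous_exp.tendsto _).comp (Tendsto.const_mul _ (Tendsto.sub ?_ S.b_lim))
    exact S.b_lim.comp (tendsto_sub_atTop_nat 1)
  simp only [sub_zero, mul_zero, Real.exp_zero, mul_one] at h1
  obtain ⟨N, hN⟩ := eventually_atTop.1 (h1.eventually_lt_const hκ)
  refine ⟨N, fun k hk w hw => ?_⟩
  have hk1 : 1 ≤ k := by omega
  rw [f_append]
  have e : S.f [k] = S.g k := rfl
  rw [e]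
  refine DistOn.mono (DistOn.comp (S.dist_f hw (S.b_pos k).le (S.b_le_one (k-1)) 
    (S.b_anti.antitone (Nat.sub_le _ _)))
    (S.dist_g_of hk1 le_rfl le_rfl fun x hx y hy => S.le_distortion hk1 hx hy)
    (fun x hx => S.g_mem hk1 hx) (S.g_anti k hk1).injOn (Real.exp_pos _).le) le_rfl (hN k hk.le).le

theorem ratio_large {η : ℝ} (hη : 1 < η) : ∃ N, ∀ k, N ≤ k → S.b k / S.b (k+1) ≤ η := by
  have hev := (S.N2.eventually_lt_const hη).and (S.N2.eventually_const_lt (show (0:ℝ) < 1 by norm_num))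
  obtain ⟨N, h1, h2⟩ := hev.exists
  refine ⟨N, fun k hk => le_trans ?_ h1.le⟩
  have hb : BddAbove (range fun k => ⨆ (_ : k ∈ Ici N), S.b k / S.b (k+1)) := by
    by_contra hb
    rw [iSup, Real.sSup_of_not_bddAbove hb] at h2
    exact lt_irrefl _ h2
  have := le_ciSup hb k
  rwa [ciSup_pos (show k ∈ Ici N from hk)] at this

end NonlinearIFS

end Part1

section Part2

theorem exists_gap {ι : Type*} [Finite ι] (A : ι → Set ℝ) (hA : ∀ i, IsCompact (A i))
    (hd : ∀ i j, i ≠ j → Disjoint (A i) (A j)) :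
    ∃ δ > 0, ∀ i j, i ≠ j → ∀ x ∈ A i, ∀ y ∈ A j, δ ≤ |x - y| := by
  have : ∀ i j, ∀ᶠ δ in 𝓝[>] (0:ℝ), i ≠ j → ∀ x ∈ A i, ∀ y ∈ A j, δ ≤ |x - y| := by
    intro i j
    by_cases hij : i = j
    · simp [hij]
    obtain ⟨δ, h0, h⟩ := (hd i j hij).exists_thickenings (hA i) (hA j).isClosed
    have h1 : ∀ᶠ e in 𝓝[>] (0:ℝ), e < δ := (eventually_lt_nhds h0).filter_mono nhdsWithin_le_nhds
    filter_upwards [h1] with e he _ x hx y hy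
    by_contra hlt
    push Not at hlt
    refine (Set.disjoint_left.1 h) (Metric.self_subset_thickening h0 _ hx) ?_
    rw [Metric.mem_thickening_iff]
    exact ⟨y, hy, by rw [Real.dist_eq]; linarith⟩
  have h2 := (eventually_all.2 fun i => eventually_all.2 fun j => this i j).and self_mem_nhdsWithin
  obtain ⟨δ, h, h0⟩ := h2.exists
  exact ⟨δ, h0, h⟩

def words (n : ℕ) : ℕ → Finset (List ℕ)
  | 0 => {[]}
  | l + 1 => (Finset.Icc 1 n ×ˢ words n l).image (fun p => p.1 :: p.2)

/-- letters in `1..n` -/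
def VW (n : ℕ) (w : List ℕ) : Prop := ∀ i ∈ w, 1 ≤ i ∧ i ≤ n

theorem VW.W {n : ℕ} {w : List ℕ} (h : VW n w) : NonlinearIFS.W w := fun i hi => (h i hi).1
theorem VW.snoc {n : ℕ} {w : List ℕ} (h : VW n w) {k : ℕ} (h1 : 1 ≤ k) (h2 : k ≤ n) : VW n (w ++ [k]) := by
  intro i hi; simp at hi; rcases hi with h' | h'
  · exact h i h'
  · omega
theorem VW.nil (n : ℕ) : VW n [] := fun i hi => by simp at hi

theorem mem_words {n l : ℕ} {w : List ℕ} : w ∈ words n l ↔ w.length = l ∧ VW n w := by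
  induction l generalizing w with
  | zero => 
    simp only [words, Finset.mem_singleton, List.length_eq_zero_iff]
    constructor
    · rintro rfl; exact ⟨rfl, VW.nil n⟩
    · exact fun h => h.1
  | succ l ih =>
    simp only [words, Finset.mem_image, Finset.mem_product, Finset.mem_Icc, Prod.exists, ih]
    constructor
    · rintro ⟨k, v, ⟨h1, h2, h3⟩, rfl⟩
      refine ⟨by simp [h2], ?_⟩
      intro i hi
      rcases List.mem_cons.1 hi with rfl | hi
      · exact h1
      · exact h3 i hi
    · rintro ⟨h1, h2⟩
      match w, h1, h2 with
      | k :: v, h1, h2 =>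
        exact ⟨k, v, ⟨h2 k (by simp), by simpa using h1, fun i hi => h2 i (by simp [hi])⟩, rfl⟩

namespace NonlinearIFS
variable (S : NonlinearIFS)

abbrev J (n : ℕ) : Set ℝ := limitSet S.g n

theorem mem_J {n : ℕ} {x : ℝ} : x ∈ S.J n ↔ ∀ l : ℕ, ∃ w, w.length = l + 1 ∧ VW n w ∧ x ∈ S.f w '' Icc (0:ℝ) 1 := by
  simp only [limitSet, mem_iInter, mem_iUnion, mem_ofPred_eq, exists_prop, and_assoc]
  rfl

theorem J_compact (n : ℕ) : IsCompact (S.J n) := by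
  have : S.J n = ⋂ l : ℕ, ⋃ w ∈ words n (l+1), S.f w '' Icc (0:ℝ) 1 := by
    ext x
    rw [mem_J]
    simp only [mem_iInter, mem_iUnion, mem_words, exists_prop, and_assoc]
  rw [this]
  have hc : ∀ l : ℕ, IsCompact (⋃ w ∈ words n (l+1), S.f w '' Icc (0:ℝ) 1) := fun l =>
    (words n (l+1)).isCompact_biUnion fun w hw =>
      isCompact_Icc.image_of_continuousOn (S.f_cont (mem_words.1 hw).2.W)
  exact (hc 0).of_isClosed_subset (isClosed_iInter fun l => (hc l).isClosed) (iInter_subset _ 0)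

theorem J_sub {n : ℕ} {x : ℝ} (hx : x ∈ S.J n) : S.b n ≤ x ∧ x ≤ 1 := by
  obtain ⟨w, h1, h2, y, hy, rfl⟩ := S.mem_J.1 hx 0
  match w, h1, h2 with
  | k :: v, h1, h2 =>
    have hk := h2 k (by simp)
    have := S.g_mem hk.1 (S.f_maps (w := v) (fun i hi => (h2 i (by simp [hi])).1) hy)
    exact ⟨(S.b_anti.antitone hk.2).trans this.1, this.2.trans (S.b_le_one _)⟩

theorem J_sub01 {n : ℕ} : S.J n ⊆ Icc 0 1 := fun _ hx =>
  ⟨(S.b_pos n).le.trans (S.J_sub hx).1, (S.J_sub hx).2⟩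

theorem J_self {n : ℕ} {x : ℝ} (hx : x ∈ S.J n) : ∃ k, 1 ≤ k ∧ k ≤ n ∧ ∃ y ∈ S.J n, x = S.g k y := by
  let P : ℕ → ℕ → Prop := fun k l => ∃ w, w.length = l ∧ VW n w ∧ ∃ y ∈ S.f w '' Icc (0:ℝ) 1, S.g k y = x
  have anti : ∀ k l m, l ≤ m → P k m → P k l := by
    rintro k l m hlm ⟨w, h1, h2, y, ⟨z, hz, rfl⟩, h3⟩
    refine ⟨w.take l, by simp [h1, hlm], fun i hi => h2 i (List.mem_of_mem_take hi), _, ⟨S.f (w.drop l) z, ?_, rfl⟩, ?_⟩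
    · exact S.f_maps (fun i hi => (h2 i (List.mem_of_mem_drop hi)).1) hz
    · rw [← h3]; congr 1
      conv_rhs => rw [← List.take_append_drop l w, f_append]
      rfl
  have ex : ∀ l, ∃ k, (1 ≤ k ∧ k ≤ n) ∧ P k l := by
    intro l
    obtain ⟨w, h1, h2, y, hy, hyx⟩ := S.mem_J.1 hx l
    match w, h1, h2 with
    | k :: v, h1, h2 =>
      exact ⟨k, h2 k (by simp), v, by simpa using h1, fun i hi => h2 i (by simp [hi]), _, ⟨y, hy, rfl⟩, hyx⟩
  have : ∃ k, (1 ≤ k ∧ k ≤ n) ∧ ∀ l, P k l := by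
    by_contra hcon
    push Not at hcon
    have : ∀ k, ∃ L, 1 ≤ k ∧ k ≤ n → ¬ P k L := by
      intro k
      by_cases hk : 1 ≤ k ∧ k ≤ n
      · obtain ⟨L, hL⟩ := hcon k hk; exact ⟨L, fun _ => hL⟩
      · exact ⟨0, fun h => (hk h).elim⟩
    choose L hL using this
    obtain ⟨k, hk, hP⟩ := ex ((Finset.Icc 1 n).sup L)
    exact hL k hk (anti k _ _ (Finset.le_sup (Finset.mem_Icc.2 hk)) hP)
  obtain ⟨k, hk, hP⟩ := this
  obtain ⟨w0, _, _, y, hy, hyx⟩ := hP 0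
  refine ⟨k, hk.1, hk.2, y, ?_, hyx.symm⟩
  have aux : ∀ w, VW n w → ∀ y ∈ S.f w '' Icc (0:ℝ) 1, y ∈ Icc (0:ℝ) 1 := by
    rintro w hw _ ⟨z, hz, rfl⟩; exact S.f_maps hw.W hz
  rw [mem_J]
  intro l
  obtain ⟨w, h1, h2, y', hy', hyx'⟩ := hP (l+1)
  have : y = y' := (S.g_anti k hk.1).injOn (aux w0 ‹_› y hy) (aux w h2 y' hy') (hyx.trans hyx'.symm)
  exact ⟨w, h1, h2, this ▸ hy'⟩

theorem g_J {n k : ℕ} (h1 : 1 ≤ k) (h2 : k ≤ n) {y : ℝ} (hy : y ∈ S.J n) : S.g k y ∈ S.J n := by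
  rw [mem_J] at hy ⊢
  intro l
  obtain ⟨w, hl, hw, z, hz, hzy⟩ := hy l
  refine ⟨(k :: w).take (l+1), by simp [hl], ?_, ?_⟩
  · intro i hi
    rcases List.mem_cons.1 (List.mem_of_mem_take hi) with rfl | h
    · exact ⟨h1, h2⟩
    · exact hw i h
  · have hkw : VW n (k :: w) := by
      intro i hi
      rcases List.mem_cons.1 hi with rfl | h
      · exact ⟨h1, h2⟩
      · exact hw i h
    refine ⟨S.f ((k :: w).drop (l+1)) z, S.f_maps (fun i hi => (hkw i (List.mem_of_mem_drop hi)).1) hz, ?_⟩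
    have : S.f (k :: w) z = S.g k y := by rw [← hzy]; rfl
    rw [← this]
    conv_rhs => rw [← List.take_append_drop (l+1) (k :: w), f_append]
    rfl

theorem f_J {n : ℕ} {w : List ℕ} (hw : VW n w) {y : ℝ} (hy : y ∈ S.J n) : S.f w y ∈ S.J n := by
  induction w with
  | nil => exact hy
  | cons k w ih =>
    have hk := hw k (by simp)
    exact S.g_J hk.1 hk.2 (ih fun i hi => hw i (by simp [hi]))

theorem J_pos {n : ℕ} {x : ℝ} (hx : x ∈ S.J n) : 0 < x := (S.b_pos n).trans_le (S.J_sub hx).1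

theorem J_lt_one {n : ℕ} {x : ℝ} (hx : x ∈ S.J n) : x < 1 := by
  obtain ⟨k, h1, h2, y, hy, rfl⟩ := S.J_self hx
  have := S.g_anti k h1 (by simp) (S.J_sub01 hy) (S.J_pos hy)
  rw [S.g_zero k h1] at this
  exact this.trans_le (S.b_le_one _)

theorem g_J_Ioo {n k : ℕ} (h1 : 1 ≤ k) {y : ℝ} (hy : y ∈ S.J n) :
    S.b k < S.g k y ∧ S.g k y < S.b (k-1) := by
  have a := S.g_anti k h1 (by simp) (S.J_sub01 hy) (S.J_pos hy)
  have b := S.g_anti k h1 (S.J_sub01 hy) (by simp) (S.J_lt_one hy)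
  rw [S.g_zero k h1] at a
  rw [S.g_one k h1] at b
  exact ⟨b, a⟩

theorem idx_unique {k j : ℕ} (hk : 1 ≤ k) (hj : 1 ≤ j) {x : ℝ} (h1 : S.b k ≤ x) (h2 : x < S.b (k-1))
    (h3 : S.b j ≤ x) (h4 : x < S.b (j-1)) : k = j := by
  have a : j - 1 < k := S.b_anti.lt_iff_gt.1 (h1.trans_lt h4)
  have b : k - 1 < j := S.b_anti.lt_iff_gt.1 (h3.trans_lt h2)
  omega

theorem g_disj {n k j : ℕ} (hk : 1 ≤ k) (hj : 1 ≤ j) {x y : ℝ} (hx : x ∈ S.J n) (hy : y ∈ S.J n)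
    (h : S.g k x = S.g j y) : k = j := by
  have a := S.g_J_Ioo hk hx
  have b := S.g_J_Ioo hj hy
  rw [← h] at b
  exact S.idx_unique hk hj a.1.le a.2 b.1.le b.2

theorem f_disj {n : ℕ} {w v : List ℕ} (hl : w.length = v.length) (hw : VW n w) (hv : VW n v) {x y : ℝ}
    (hx : x ∈ S.J n) (hy : y ∈ S.J n) (h : S.f w x = S.f v y) : w = v := by
  induction w generalizing v with
  | nil => simp at hl; exact (List.length_eq_zero_iff.1 hl.symm).symm
  | cons k w ih =>
    match v, hl, hv with
    | j :: v, hl, hv =>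
      have hk := hw k (by simp)
      have hj := hv j (by simp)
      have hw' : VW n w := fun i hi => hw i (by simp [hi])
      have hv' : VW n v := fun i hi => hv i (by simp [hi])
      have e : S.g k (S.f w x) = S.g j (S.f v y) := h
      have := S.g_disj hk.1 hj.1 (S.f_J hw' hx) (S.f_J hv' hy) e
      subst this
      have := ih (by simpa using hl) hw' hv' ((S.g_anti k hk.1).injOn (S.J_sub01 (S.f_J hw' hx)) (S.J_sub01 (S.f_J hv' hy)) e)
      rw [this]

theorem J_words {n : ℕ} (l : ℕ) {x : ℝ} (hx : x ∈ S.J n) : ∃ w ∈ words n l, ∃ y ∈ S.J n, x = S.f w y := by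
  induction l with
  | zero => exact ⟨[], mem_words.2 ⟨rfl, VW.nil n⟩, x, hx, rfl⟩
  | succ l ih =>
    obtain ⟨w, hw, y, hy, rfl⟩ := ih
    obtain ⟨k, h1, h2, z, hz, rfl⟩ := S.J_self hy
    rw [mem_words] at hw
    exact ⟨w ++ [k], mem_words.2 ⟨by simp [hw.1], hw.2.snoc h1 h2⟩, z, hz, (S.f_snoc _ _ _).symm⟩

theorem fJ_compact {n : ℕ} {w : List ℕ} (hw : VW n w) : IsCompact (S.f w '' S.J n) :=
  (S.J_compact n).image_of_continuousOn ((S.f_cont hw.W).mono S.J_sub01)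

/-- length of the cylinder -/
def len (w : List ℕ) : ℝ := |S.f w 0 - S.f w 1|

theorem len_pos {w : List ℕ} (hw : W w) : 0 < S.len w :=
  abs_pos.2 (sub_ne_zero.2 fun h => zero_ne_one (S.f_inj hw (by simp) (by simp) h))

theorem len_le {w : List ℕ} (hw : W w) : S.len w ≤ S.α ^ w.length := by
  have := S.f_lip hw (x := 0) (y := 1) (by simp) (by simp)
  simpa [len] using this

theorem dist_upper {w : List ℕ} {κ : ℝ} (h : DistOn (S.f w) (Icc 0 1) κ) {x y : ℝ} (hx : x ∈ Icc (0:ℝ) 1)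
    (hy : y ∈ Icc (0:ℝ) 1) : |S.f w x - S.f w y| ≤ κ * S.len w * |x - y| := by
  have := h x hx y hy 0 (by simp) 1 (by simp)
  simp at this
  rw [mul_assoc]; exact this

theorem dist_lower {w : List ℕ} {κ : ℝ} (h : DistOn (S.f w) (Icc 0 1) κ) {x y : ℝ} (hx : x ∈ Icc (0:ℝ) 1)
    (hy : y ∈ Icc (0:ℝ) 1) : S.len w * |x - y| ≤ κ * |S.f w x - S.f w y| := by
  have := h 0 (by simp) 1 (by simp) x hx y hy
  simpa [len] using this

end NonlinearIFS

end Part2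

section Part3

theorem cover_lower {ι : Type*} [Fintype ι] [Nontrivial ι] {J : Set ℝ} (hJ : J.Nonempty) (f : ι → ℝ → ℝ)
    (hf : ∀ i, MapsTo (f i) J J) {gap t : ℝ} (hg : 0 < gap) (ht : 0 < t)
    (hgap : ∀ i j, i ≠ j → ∀ x ∈ f i '' J, ∀ y ∈ f j '' J, gap ≤ |x - y|)
    (c : ι → ℝ) (hc : ∀ i, 0 < c i) (hfc : ∀ i, ∀ x ∈ J, ∀ y ∈ J, c i * |x - y| ≤ |f i x - f i y|)
    (hsum : 1 ≤ ∑ i, c i ^ t) :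
    ∀ (m : ℕ) (s : Finset ℕ) (U : ℕ → Set ℝ) (d : ℕ → ℝ), s.card = m → (∀ i, 0 < d i) →
      (∀ i, ∀ x ∈ U i, ∀ y ∈ U i, |x - y| ≤ d i) → J ⊆ ⋃ i ∈ s, U i → gap ^ t ≤ ∑ i ∈ s, d i ^ t := by
  classical
  intro m
  induction m using Nat.strong_induction_on with
  | _ m ih =>
  intro s U d hm hd hU hcov
  by_cases hbig : ∃ a ∈ s, gap ≤ d a
  · obtain ⟨a, ha, h⟩ := hbig
    calc gap ^ t ≤ d a ^ t := Real.rpow_le_rpow hg.le h ht.le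
      _ ≤ _ := Finset.single_le_sum (f := fun i => d i ^ t) (fun i _ => Real.rpow_nonneg (hd i).le _) ha
  push Not at hbig
  let σ : ι → Finset ℕ := fun i => s.filter fun a => (U a ∩ f i '' J).Nonempty
  have hdisj : ∀ i j, i ≠ j → Disjoint (σ i) (σ j) := by
    intro i j hij
    rw [Finset.disjoint_left]
    intro a ha hb
    simp only [σ, Finset.mem_filter] at ha hb
    obtain ⟨has, x, hx1, hx2⟩ := ha
    obtain ⟨_, y, hy1, hy2⟩ := hb
    have := hgap i j hij x hx2 y hy2
    have := hU a x hx1 y hy1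
    linarith [hbig a has]
  have hcov' : ∀ i, ∀ x ∈ J, ∃ a ∈ σ i, f i x ∈ U a := by
    intro i x hx
    have := hcov (hf i hx)
    simp only [mem_iUnion, exists_prop] at this
    obtain ⟨a, ha, h⟩ := this
    exact ⟨a, Finset.mem_filter.2 ⟨ha, _, h, mem_image_of_mem _ hx⟩, h⟩
  have hne : ∀ i, (σ i).Nonempty := by
    intro i
    obtain ⟨x, hx⟩ := hJ
    obtain ⟨a, ha, _⟩ := hcov' i x hx
    exact ⟨a, ha⟩
  have hcard : ∀ i, (σ i).card < m := by
    intro i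
    obtain ⟨j, hj⟩ := exists_ne i
    obtain ⟨a, ha⟩ := hne j
    rw [← hm]
    apply Finset.card_lt_card
    refine ⟨Finset.filter_subset _ _, fun hsub => ?_⟩
    exact Finset.disjoint_left.1 (hdisj j i hj) ha (hsub (Finset.mem_filter.1 ha).1)
  have hpiece : ∀ i, c i ^ t * gap ^ t ≤ ∑ a ∈ σ i, d a ^ t := by
    intro i
    have := ih _ (hcard i) (σ i) (fun a => J ∩ f i ⁻¹' (U a)) (fun a => d a / c i) rfl
      (fun a => div_pos (hd a) (hc i)) (by
        rintro a x ⟨hx, hx'⟩ y ⟨hy, hy'⟩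
        rw [le_div_iff₀ (hc i), mul_comm]
        exact (hfc i x hx y hy).trans (hU a _ hx' _ hy')) (by
        intro x hx
        obtain ⟨a, ha, h⟩ := hcov' i x hx
        simp only [mem_iUnion, exists_prop]
        exact ⟨a, ha, hx, h⟩)
    calc c i ^ t * gap ^ t ≤ c i ^ t * ∑ a ∈ σ i, (d a / c i) ^ t :=
          mul_le_mul_of_nonneg_left this (Real.rpow_nonneg (hc i).le _)
      _ = _ := by
        rw [Finset.mul_sum]
        refine Finset.sum_congr rfl fun a _ => ?_
        rw [← Real.mul_rpow (hc i).le (div_pos (hd a) (hc i)).le, mul_div_cancel₀ _ (hc i).ne']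
  calc gap ^ t ≤ (∑ i, c i ^ t) * gap ^ t := le_mul_of_one_le_left (Real.rpow_nonneg hg.le _) hsum
    _ = ∑ i, c i ^ t * gap ^ t := Finset.sum_mul _ _ _
    _ ≤ ∑ i, ∑ a ∈ σ i, d a ^ t := Finset.sum_le_sum fun i _ => hpiece i
    _ = ∑ a ∈ Finset.univ.biUnion σ, d a ^ t := by
        rw [Finset.sum_biUnion]
        intro i _ j _ hij; exact hdisj i j hij
    _ ≤ _ := Finset.sum_le_sum_of_subset_of_nonneg (by
        intro a ha
        obtain ⟨i, _, h⟩ := Finset.mem_biUnion.1 ha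
        exact (Finset.mem_filter.1 h).1) fun a _ _ => Real.rpow_nonneg (hd a).le _

theorem finite_cover {J : Set ℝ} (hJ : IsCompact J) {t : ℝ} (ht : 0 < t) (h0 : μH[t] J = 0) {ε : ℝ} (hε : 0 < ε) :
    ∃ (s : Finset ℕ) (U : ℕ → Set ℝ) (d : ℕ → ℝ), (∀ i, 0 < d i) ∧ (∀ i, ∀ x ∈ U i, ∀ y ∈ U i, |x - y| ≤ d i) ∧
      J ⊆ ⋃ i ∈ s, U i ∧ ∑ i ∈ s, d i ^ t < ε := by
  rw [Measure.hausdorffMeasure_apply] at h0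
  have h1 := (ENNReal.iSup_eq_zero.1 (ENNReal.iSup_eq_zero.1 h0 1)) one_pos
  have h2 : (0 : ENNReal) < ENNReal.ofReal (ε / 2) := ENNReal.ofReal_pos.2 (by linarith)
  rw [← h1] at h2
  simp only [iInf_lt_iff] at h2
  obtain ⟨T, hT, hd, hs⟩ := h2
  have hb : ∀ i, Bornology.IsBounded (T i) := fun i => by
    rw [Metric.isBounded_iff_ediam_ne_top]
    exact ((hd i).trans_lt (by simp)).ne
  let D : ℕ → ℝ := fun i => Metric.diam (T i)
  have hD0 : ∀ i, 0 ≤ D i := fun i => Metric.diam_nonneg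
  have hDeq : ∀ i, (⨆ (_ : (T i).Nonempty), Metric.ediam (T i) ^ t) = ENNReal.ofReal (D i ^ t) := by
    intro i
    rcases (T i).eq_empty_or_nonempty with h | h
    · simp [D, h, Real.zero_rpow ht.ne']
    · rw [iSup_pos h, ← ENNReal.ofReal_rpow_of_nonneg (hD0 i) ht.le]
      congr 1
      simp only [D, Metric.diam]
      rw [ENNReal.ofReal_toReal ((hd i).trans_lt (by simp)).ne]
  have he : ∀ i : ℕ, ∃ d, D i < d ∧ d ^ t < D i ^ t + ε / 2 / 2 / 2 ^ i := by
    intro i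
    have hc : ContinuousAt (fun x : ℝ => x ^ t) (D i) := Real.continuousAt_rpow_const _ _ (Or.inr ht.le)
    have h3 : ∀ᶠ x in 𝓝 (D i), x ^ t < D i ^ t + ε / 2 / 2 / 2 ^ i :=
      hc.eventually_lt_const (by have : 0 < ε / 2 / 2 / 2 ^ i := by positivity
                                 linarith)
    have h4 := (h3.filter_mono (nhdsWithin_le_nhds (s := Ioi (D i)))).and self_mem_nhdsWithin
    obtain ⟨d, h5, h6⟩ := h4.exists
    exact ⟨d, h6, h5⟩
  choose d hd1 hd2 using he
  have hcov : J ⊆ ⋃ i, Metric.thickening ((d i - D i) / 2) (T i) := by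
    intro x hx
    obtain ⟨i, hi⟩ := mem_iUnion.1 (hT hx)
    exact mem_iUnion.2 ⟨i, Metric.self_subset_thickening (by linarith [hd1 i]) _ hi⟩
  obtain ⟨s, hs'⟩ := hJ.elim_finite_subcover _ (fun i => Metric.isOpen_thickening) hcov
  refine ⟨s, _, d, fun i => (hD0 i).trans_lt (hd1 i), ?_, hs', ?_⟩
  · intro i x hx y hy
    rw [Metric.mem_thickening_iff] at hx hy
    obtain ⟨a, ha, hxa⟩ := hx
    obtain ⟨b, hb', hyb⟩ := hy
    have h7 := Metric.dist_le_diam_of_mem (hb i) ha hb'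
    have h8 := dist_triangle4 x a b y
    rw [dist_comm b y] at h8
    rw [← Real.dist_eq]
    simp only [D] at hxa hyb
    linarith
  · have h3 : ∑ i ∈ s, D i ^ t < ε / 2 := by
      have : ∑ i ∈ s, ENNReal.ofReal (D i ^ t) < ENNReal.ofReal (ε / 2) := by
        refine lt_of_le_of_lt ?_ hs
        simp only [← hDeq]
        exact ENNReal.sum_le_tsum s
      rw [← ENNReal.ofReal_sum_of_nonneg fun i _ => Real.rpow_nonneg (hD0 i) _] at this
      exact (ENNReal.ofReal_lt_ofReal_iff (by linarith)).1 this
    have h4 : ∑ i ∈ s, ε / 2 / 2 / 2 ^ i ≤ ε / 2 := by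
      have := (hasSum_geometric_two' (ε / 2))
      exact (this.summable.sum_le_tsum s (fun i _ => by positivity)).trans_eq this.tsum_eq
    calc ∑ i ∈ s, d i ^ t ≤ ∑ i ∈ s, (D i ^ t + ε / 2 / 2 / 2 ^ i) := Finset.sum_le_sum fun i _ => (hd2 i).le
      _ = _ := Finset.sum_add_distrib
      _ < ε := by linarith

theorem content_zero {ι : Type*} {J : Set ℝ} (hJ : Bornology.IsBounded J) (s : Finset ι) (f : ι → ℝ → ℝ) (ρ : ι → NNReal)
    (hρ : ∀ i ∈ s, 0 < ρ i)
    (hf : ∀ i ∈ s, LipschitzOnWith (ρ i) (f i) J) (hcov : J ⊆ ⋃ i ∈ s, f i '' J) {t : ℝ} (ht : 0 < t)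
    (hs : ∑ i ∈ s, ρ i ^ t < 1) : μH[t] J = 0 := by
  let M : OuterMeasure ℝ := OuterMeasure.ofFunction (fun A => Metric.ediam A ^ t) (by simp [ht])
  have hfin : M J ≠ ⊤ := by
    refine ne_top_of_le_ne_top ?_ (OuterMeasure.ofFunction_le (m := fun A => Metric.ediam A ^ t) J)
    exact ENNReal.rpow_ne_top_of_nonneg ht.le (Metric.isBounded_iff_ediam_ne_top.1 hJ)
  have himg : ∀ i ∈ s, M (f i '' J) ≤ ((ρ i ^ t : NNReal) : ENNReal) * M J := by
    intro i hi
    have hc0 : ((ρ i ^ t : NNReal) : ENNReal) ≠ 0 := by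
      have := NNReal.rpow_pos (p := t) (hρ i hi)
      exact_mod_cast this.ne'
    have e : M J = ⨅ (T : ℕ → Set ℝ) (_ : J ⊆ iUnion T), ∑' n, Metric.ediam (T n) ^ t :=
      OuterMeasure.ofFunction_apply _ _ _
    rw [e, ENNReal.mul_iInf_of_ne hc0 ENNReal.coe_ne_top]
    refine le_iInf fun T => ?_
    rw [ENNReal.mul_iInf_of_ne hc0 ENNReal.coe_ne_top]
    refine le_iInf fun hT => ?_
    calc M (f i '' J) ≤ M (⋃ n, f i '' (J ∩ T n)) := by
          apply measure_mono
          rintro _ ⟨x, hx, rfl⟩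
          obtain ⟨n, hn⟩ := mem_iUnion.1 (hT hx)
          exact mem_iUnion.2 ⟨n, x, ⟨hx, hn⟩, rfl⟩
      _ ≤ ∑' n, M (f i '' (J ∩ T n)) := measure_iUnion_le _
      _ ≤ ∑' n, ((ρ i ^ t : NNReal) : ENNReal) * Metric.ediam (T n) ^ t := by
          refine ENNReal.tsum_le_tsum fun n => ?_
          refine (OuterMeasure.ofFunction_le (m := fun A => Metric.ediam A ^ t) _).trans ?_
          rw [ENNReal.coe_rpow_of_nonneg _ ht.le, ← ENNReal.mul_rpow_of_nonneg _ _ ht.le]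
          refine ENNReal.rpow_le_rpow ?_ ht.le
          apply Metric.ediam_le
          rintro _ ⟨x, hx, rfl⟩ _ ⟨y, hy, rfl⟩
          refine (hf i hi hx.1 hy.1).trans ?_
          gcongr
          exact Metric.edist_le_ediam_of_mem hx.2 hy.2
      _ = _ := ENNReal.tsum_mul_left
  have hz : M J = 0 := by
    by_contra hne
    have h1 : M J ≤ ∑ i ∈ s, ((ρ i ^ t : NNReal) : ENNReal) * M J :=
      (measure_mono hcov).trans ((measure_biUnion_finset_le s _).trans (Finset.sum_le_sum himg))
    rw [← Finset.sum_mul] at h1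
    have h2 : (∑ i ∈ s, ((ρ i ^ t : NNReal) : ENNReal)) < 1 := by exact_mod_cast hs
    have h3 := ENNReal.mul_lt_mul_left hne hfin h2
    rw [one_mul] at h3
    exact absurd h1 (not_le.2 h3)
  rw [Measure.hausdorffMeasure_apply]
  refine ENNReal.iSup_eq_zero.2 fun r => ENNReal.iSup_eq_zero.2 fun hr => ?_
  rw [← nonpos_iff_eq_zero]
  refine le_of_forall_pos_le_add fun ε hε => ?_
  rw [zero_add]
  have e : M J = ⨅ (T : ℕ → Set ℝ) (_ : J ⊆ iUnion T), ∑' n, Metric.ediam (T n) ^ t :=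
      OuterMeasure.ofFunction_apply _ _ _
  have hlt : M J < min ε (r ^ t) := by
    rw [hz]; exact lt_min hε (ENNReal.rpow_pos_of_nonneg hr ht.le)
  rw [e] at hlt
  simp only [iInf_lt_iff] at hlt
  obtain ⟨T, hT, h⟩ := hlt
  refine (iInf₂_le T hT).trans ((iInf_le _ fun n => ?_).trans ?_)
  · have : Metric.ediam (T n) ^ t ≤ r ^ t := (ENNReal.le_tsum n).trans (h.le.trans (min_le_right _ _))
    exact (ENNReal.rpow_le_rpow_iff ht).1 this
  · refine le_trans (ENNReal.tsum_le_tsum fun n => iSup_le fun _ => le_rfl) (h.le.trans (min_le_left _ _))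

end Part3

section Part4

namespace NonlinearIFS
variable (S : NonlinearIFS)

theorem len_nonneg (w : List ℕ) : 0 ≤ S.len w := abs_nonneg _

theorem J_nonempty {n : ℕ} {h : ℝ} (hh : 0 < h) (hd : dimH (S.J n) = ENNReal.ofReal h) : (S.J n).Nonempty := by
  rw [nonempty_iff_ne_empty]
  intro he
  rw [he, dimH_empty] at hd
  exact absurd hd.symm (ENNReal.ofReal_pos.2 hh).ne'

theorem sum_len_le {n : ℕ} (hn : 2 ≤ n) {h : ℝ} (hh : 0 < h) (hd : dimH (S.J n) = ENNReal.ofReal h) {l : ℕ}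
    (hl : 1 ≤ l) : ∑ w ∈ words n l, (S.len w / S.K) ^ h ≤ 1 := by
  by_contra hcon
  push Not at hcon
  have hpos : ∀ w ∈ words n l, 0 < S.len w / S.K := fun w hw =>
    div_pos (S.len_pos (mem_words.1 hw).2.W) S.K_pos
  have hc : Continuous fun t : ℝ => ∑ w ∈ words n l, (S.len w / S.K) ^ t :=
    continuous_finsetSum _ fun w hw => Real.continuous_const_rpow (hpos w hw).ne'
  have h1 : ∀ᶠ t in 𝓝 h, 1 < ∑ w ∈ words n l, (S.len w / S.K) ^ t := hc.continuousAt.eventually_const_lt hcon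
  obtain ⟨t, ht1, ht2⟩ := ((h1.filter_mono (nhdsWithin_le_nhds (s := Ioi h))).and self_mem_nhdsWithin).exists
  have ht2 : h < t := ht2
  have ht0 : 0 < t := hh.trans ht2
  have hz : μH[t] (S.J n) = 0 := by
    have := hausdorffMeasure_of_dimH_lt (s := S.J n) (d := t.toNNReal) (by
      rw [hd]
      exact (ENNReal.ofReal_lt_ofReal_iff ht0).2 ht2)
    rwa [Real.coe_toNNReal _ ht0.le] at this
  have : Nontrivial (words n l) := by
    refine ⟨⟨List.replicate l 1, mem_words.2 ⟨by simp, ?_⟩⟩, ⟨List.replicate l 2, mem_words.2 ⟨by simp, ?_⟩⟩, ?_⟩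
    · intro i hi; have := (List.mem_replicate.1 hi).2; omega
    · intro i hi; have := (List.mem_replicate.1 hi).2; omega
    · intro he
      have he := congrArg Subtype.val he
      simp only at he
      obtain ⟨m, rfl⟩ : ∃ m, l = m + 1 := ⟨l - 1, by omega⟩
      simp [List.replicate_succ] at he
  obtain ⟨gap, hg, hgap⟩ := exists_gap (fun w : words n l => S.f w.1 '' S.J n)
    (fun w => S.fJ_compact (mem_words.1 w.2).2) (by
      intro w v hwv
      rw [Set.disjoint_left]
      rintro _ ⟨x, hx, rfl⟩ ⟨y, hy, hxy⟩
      apply hwv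
      have a := mem_words.1 w.2
      have b := mem_words.1 v.2
      exact Subtype.ext (S.f_disj (by omega) a.2 b.2 hx hy hxy.symm))
  obtain ⟨s, U, d, h3, h4, h5, h6⟩ := finite_cover (S.J_compact n) ht0 hz (Real.rpow_pos_of_pos hg t)
  have := cover_lower (S.J_nonempty hh hd) (fun w : words n l => S.f w.1)
    (fun w x hx => S.f_J (mem_words.1 w.2).2 hx) hg ht0 hgap (fun w => S.len w.1 / S.K)
    (fun w => hpos w.1 w.2) (by
      intro w x hx y hy
      have := S.dist_lower (S.dist_K (mem_words.1 w.2).2.W) (S.J_sub01 hx) (S.J_sub01 hy)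
      rw [div_mul_eq_mul_div, div_le_iff₀ S.K_pos, mul_comm _ S.K]
      exact this) (by
      rw [Finset.sum_coe_sort (words n l) (fun w => (S.len w / S.K) ^ t)]
      exact ht1.le) _ s U d rfl h3 h4 h5
  linarith

/-- Upper estimate of the measure by sums over cylinders. -/
theorem H_le_of_sum {n : ℕ} {h : ℝ} (hh : 0 < h) {B : ℝ}
    (hB : ∀ l, 1 ≤ l → ∑ w ∈ words n l, S.len w ^ h ≤ B) : μH[h] (S.J n) ≤ ENNReal.ofReal B := by
  have hα : Tendsto (fun l : ℕ => ENNReal.ofReal (S.α ^ (l+1))) atTop (𝓝 0) := by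
    have := (tendsto_pow_atTop_nhds_zero_of_lt_one S.α_pos.le S.α_lt).comp (tendsto_add_atTop_nat 1)
    have := (ENNReal.continuous_ofReal.tendsto _).comp this
    simpa [Function.comp_def] using this
  have hdiam : ∀ w, W w → Metric.ediam (S.f w '' S.J n) ≤ ENNReal.ofReal (S.len w) := by
    intro w hw
    apply Metric.ediam_le
    rintro _ ⟨x, hx, rfl⟩ _ ⟨y, hy, rfl⟩
    rw [edist_dist, Real.dist_eq]
    apply ENNReal.ofReal_le_ofReal
    have hx := S.J_sub01 hx
    have hy := S.J_sub01 hy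
    have e0 : (0:ℝ) ∈ Icc (0:ℝ) 1 := by simp
    have e1 : (1:ℝ) ∈ Icc (0:ℝ) 1 := by simp
    unfold len
    rcases S.f_mono hw with m | m
    · have a1 := m.monotoneOn e0 hx hx.1
      have a2 := m.monotoneOn e0 hy hy.1
      have a3 := m.monotoneOn hx e1 hx.2
      have a4 := m.monotoneOn hy e1 hy.2
      rw [abs_sub_comm (S.f w 0)]
      refine abs_le.2 ⟨?_, ?_⟩ <;> linarith [le_abs_self (S.f w 1 - S.f w 0)]
    · have a1 := m.antitoneOn e0 hx hx.1
      have a2 := m.antitoneOn e0 hy hy.1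
      have a3 := m.antitoneOn hx e1 hx.2
      have a4 := m.antitoneOn hy e1 hy.2
      refine abs_le.2 ⟨?_, ?_⟩ <;> linarith [le_abs_self (S.f w 0 - S.f w 1)]
  have := Measure.hausdorffMeasure_le_liminf_sum (β := ℕ) (ι := fun l => words n (l+1)) h (S.J n) _ hα
    (fun l w => S.f w.1 '' S.J n) (by
      refine Eventually.of_forall fun l w => ?_
      have a := mem_words.1 w.2
      refine (hdiam w.1 a.2.W).trans (ENNReal.ofReal_le_ofReal ?_)
      exact (S.len_le a.2.W).trans_eq (by rw [a.1])) (by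
      refine Eventually.of_forall fun l x hx => ?_
      obtain ⟨w, hw, y, hy, rfl⟩ := S.J_words (l+1) hx
      exact mem_iUnion.2 ⟨⟨w, hw⟩, y, hy, rfl⟩)
  refine this.trans ?_
  refine liminf_le_of_le (by isBoundedDefault) ?_
  intro b hb
  obtain ⟨l, hl⟩ := hb.exists
  refine hl.trans ?_
  calc ∑ w : words n (l+1), Metric.ediam (S.f w.1 '' S.J n) ^ h
      ≤ ∑ w : words n (l+1), ENNReal.ofReal (S.len w.1 ^ h) := by
        refine Finset.sum_le_sum fun w _ => ?_
        rw [← ENNReal.ofReal_rpow_of_nonneg (S.len_nonneg _) hh.le]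
        exact ENNReal.rpow_le_rpow (hdiam w.1 (mem_words.1 w.2).2.W) hh.le
    _ = ∑ w ∈ words n (l+1), ENNReal.ofReal (S.len w ^ h) :=
        Finset.sum_coe_sort (words n (l+1)) (fun w => ENNReal.ofReal (S.len w ^ h))
    _ = ENNReal.ofReal (∑ w ∈ words n (l+1), S.len w ^ h) :=
        (ENNReal.ofReal_sum_of_nonneg fun w _ => Real.rpow_nonneg (abs_nonneg _) _).symm
    _ ≤ _ := ENNReal.ofReal_le_ofReal (hB _ (by omega))

theorem H_lt_top {n : ℕ} (hn : 2 ≤ n) {h : ℝ} (hh : 0 < h) (hd : dimH (S.J n) = ENNReal.ofReal h) :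
    μH[h] (S.J n) < ⊤ := by
  refine lt_of_le_of_lt (S.H_le_of_sum hh (B := S.K ^ h) ?_) ENNReal.ofReal_lt_top
  intro l hl
  have := S.sum_len_le hn hh hd hl
  have e : ∑ w ∈ words n l, S.len w ^ h = S.K ^ h * ∑ w ∈ words n l, (S.len w / S.K) ^ h := by
    rw [Finset.mul_sum]
    refine Finset.sum_congr rfl fun w _ => ?_
    rw [← Real.mul_rpow S.K_pos.le (div_nonneg (S.len_nonneg _) S.K_pos.le), mul_div_cancel₀ _ S.K_pos.ne']
  rw [e]
  exact mul_le_of_le_one_right (Real.rpow_nonneg S.K_pos.le _) this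

theorem small_in_cyl {n : ℕ} (hne : (S.J n).Nonempty) : ∃ C > 0, ∀ (U : Set ℝ) (d : ℝ), 0 < d → (∀ x ∈ U, ∀ y ∈ U, |x - y| ≤ d) →
    ∃ w, VW n w ∧ U ∩ S.J n ⊆ S.f w '' S.J n ∧ S.len w ≤ C * d := by
  obtain ⟨gap, hg, hgap⟩ := exists_gap (fun k : Finset.Icc 1 n => S.g k.1 '' S.J n)
    (fun k => (S.J_compact n).image_of_continuousOn ((S.g_cont (Finset.mem_Icc.1 k.2).1).mono S.J_sub01)) (by
      intro w v hwv
      rw [Set.disjoint_left]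
      rintro _ ⟨x, hx, rfl⟩ ⟨y, hy, hxy⟩
      apply hwv
      exact Subtype.ext (S.g_disj (Finset.mem_Icc.1 w.2).1 (Finset.mem_Icc.1 v.2).1 hx hy hxy.symm))
  refine ⟨2 * S.K / gap, by have := S.K_pos; positivity, ?_⟩
  intro U d hd hU
  by_contra hcon
  push Not at hcon
  have key : ∀ m : ℕ, ∃ w, w.length = m ∧ VW n w ∧ U ∩ S.J n ⊆ S.f w '' S.J n := by
    intro m
    induction m with
    | zero => exact ⟨[], rfl, VW.nil n, fun x hx => ⟨x, hx.2, rfl⟩⟩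
    | succ m ih =>
      obtain ⟨w, h1, h2, h3⟩ := ih
      have h4 := hcon w h2 h3
      -- find the letter
      have hk : ∃ k, 1 ≤ k ∧ k ≤ n ∧ ∀ y ∈ S.J n, S.f w y ∈ U → y ∈ S.g k '' S.J n := by
        by_cases hex : ∃ y ∈ S.J n, S.f w y ∈ U
        · obtain ⟨y0, hy0, hy0U⟩ := hex
          obtain ⟨k, hk1, hk2, z0, hz0, e0⟩ := S.J_self hy0
          refine ⟨k, hk1, hk2, fun y hy hyU => ?_⟩
          obtain ⟨j, hj1, hj2, z, hz, e⟩ := S.J_self hy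
          by_cases hkj : k = j
          · rw [hkj]; exact ⟨z, hz, e.symm⟩
          exfalso
          have h5 := hgap ⟨k, Finset.mem_Icc.2 ⟨hk1, hk2⟩⟩ ⟨j, Finset.mem_Icc.2 ⟨hj1, hj2⟩⟩
            (fun h => hkj (congrArg Subtype.val h)) y0 ⟨z0, hz0, e0.symm⟩ y ⟨z, hz, e.symm⟩
          have h6 := S.dist_lower (S.dist_K h2.W) (S.J_sub01 hy0) (S.J_sub01 hy)
          have h7 := hU _ hy0U _ hyU
          have h8 : S.len w * gap ≤ S.K * d :=
            (mul_le_mul_of_nonneg_left h5 (abs_nonneg _)).trans (h6.trans (mul_le_mul_of_nonneg_left h7 S.K_pos.le))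
          have h9 : 2 * S.K / gap * d * gap < S.len w * gap := mul_lt_mul_of_pos_right h4 hg
          have h10 : 2 * S.K / gap * d * gap = 2 * (S.K * d) := by field_simp
          have := mul_pos S.K_pos hd
          linarith
        · push Not at hex
          obtain ⟨y, hy⟩ := hne
          obtain ⟨k, hk1, hk2, _⟩ := S.J_self hy
          exact ⟨k, hk1, hk2, fun y hy hyU => absurd hyU (hex y hy)⟩
      obtain ⟨k, hk1, hk2, hk3⟩ := hk
      refine ⟨w ++ [k], by simp [h1], h2.snoc hk1 hk2, ?_⟩
      intro x hx
      obtain ⟨y, hy, rfl⟩ := h3 hx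
      obtain ⟨z, hz, rfl⟩ := hk3 y hy hx.1
      exact ⟨z, hz, S.f_snoc _ _ _⟩
  have hpos : 0 < 2 * S.K / gap * d := by have := S.K_pos; positivity
  obtain ⟨m, hm⟩ := exists_pow_lt_of_lt_one hpos S.α_lt
  obtain ⟨w, h1, h2, h3⟩ := key m
  have := hcon w h2 h3
  have h4 := S.len_le h2.W
  rw [h1] at h4
  linarith

theorem H_pos {n : ℕ} {h : ℝ} (hh : 0 < h) (hd : dimH (S.J n) = ENNReal.ofReal h) :
    0 < μH[h] (S.J n) := by
  rw [pos_iff_ne_zero]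
  intro hz
  obtain ⟨C, hC, hCU⟩ := S.small_in_cyl (S.J_nonempty hh hd)
  have hKC : 0 < S.K * C := mul_pos S.K_pos hC
  obtain ⟨s, U, d, h3, h4, h5, h6⟩ := finite_cover (S.J_compact n) hh hz
    (ε := 1 / (S.K * C) ^ h) (by positivity)
  choose w hw1 hw2 hw3 using fun i => hCU (U i) (d i) (h3 i) (h4 i)
  have hlt : ∑ i ∈ s, (S.K * C * d i) ^ h < 1 := by
    have e : ∑ i ∈ s, (S.K * C * d i) ^ h = (S.K * C) ^ h * ∑ i ∈ s, d i ^ h := by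
      rw [Finset.mul_sum]
      exact Finset.sum_congr rfl fun i _ => Real.mul_rpow hKC.le (h3 i).le
    rw [e]
    rw [lt_div_iff₀ (by positivity)] at h6
    linarith
  have hc : Continuous fun t : ℝ => ∑ i ∈ s, (S.K * C * d i) ^ t :=
    continuous_finsetSum _ fun i _ => Real.continuous_const_rpow (mul_pos hKC (h3 i)).ne'
  have h1 : ∀ᶠ t in 𝓝 h, ∑ i ∈ s, (S.K * C * d i) ^ t < 1 := hc.continuousAt.eventually_lt_const hlt
  have h1' := h1.and (lt_mem_nhds hh)
  obtain ⟨t, ⟨ht1, ht0⟩, ht2⟩ := ((h1'.filter_mono (nhdsWithin_le_nhds (s := Iio h))).and self_mem_nhdsWithin).exists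
  have ht2 : t < h := ht2
  have hinf : μH[t] (S.J n) = ⊤ := by
    have := hausdorffMeasure_of_lt_dimH (s := S.J n) (d := t.toNNReal) (by
      rw [hd]
      exact (ENNReal.ofReal_lt_ofReal_iff hh).2 ht2)
    rwa [Real.coe_toNNReal _ ht0.le] at this
  have hl0 : ∀ i, 0 < S.K * S.len (w i) := fun i => mul_pos S.K_pos (S.len_pos (hw1 i).W)
  have := content_zero (S.J_compact n).isBounded s (fun i => S.f (w i)) (fun i => ⟨S.K * S.len (w i), (hl0 i).le⟩)
    (fun i _ => hl0 i) (by
      intro i _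
      refine LipschitzOnWith.of_dist_le_mul fun x hx y hy => ?_
      rw [Real.dist_eq, Real.dist_eq]
      exact S.dist_upper (S.dist_K (hw1 i).W) (S.J_sub01 hx) (S.J_sub01 hy)) (by
      intro x hx
      have := h5 hx
      simp only [mem_iUnion, exists_prop] at this ⊢
      obtain ⟨i, hi, hxi⟩ := this
      exact ⟨i, hi, hw2 i ⟨hxi, hx⟩⟩) ht0 (by
      have : ∑ i ∈ s, (S.K * S.len (w i)) ^ t < 1 := by
        refine lt_of_le_of_lt (Finset.sum_le_sum fun i _ => ?_) ht1
        refine Real.rpow_le_rpow (hl0 i).le ?_ ht0.le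
        rw [mul_assoc]
        exact mul_le_mul_of_nonneg_left (hw3 i) S.K_pos.le
      rw [← NNReal.coe_lt_coe]
      push_cast
      exact this)
  rw [this] at hinf
  exact absurd hinf (by simp)

end NonlinearIFS

end Part4

section Part5

theorem rpow_le_add {x h : ℝ} (hx : 0 ≤ x) (h0 : 0 < h) (h1 : h ≤ 1) (hx1 : x ≤ 1) : x ^ h ≤ x + (1 - h) := by
  have := Real.geom_mean_le_arith_mean2_weighted h0.le (sub_nonneg.2 h1) hx zero_le_one (by ring)
  rw [Real.one_rpow, mul_one, mul_one] at this
  nlinarith [mul_nonneg (sub_nonneg.2 h1) hx]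

theorem le_rpow_self {x h : ℝ} (hx : 0 ≤ x) (h0 : 0 < h) (h1 : h ≤ 1) (hx1 : x ≤ 1) : x ≤ x ^ h := by
  rcases hx.eq_or_lt with rfl | hx
  · rw [Real.zero_rpow h0.ne']
  · have := Real.rpow_le_rpow_of_exponent_ge hx hx1 h1
    rwa [Real.rpow_one] at this

theorem sum_rpow_le {ι : Type*} (s : Finset ι) (x : ι → ℝ) (hx : ∀ i ∈ s, 0 ≤ x i) {h : ℝ} (h0 : 0 < h) (h1 : h ≤ 1) :
    ∑ i ∈ s, x i ^ h ≤ (s.card : ℝ) ^ (1 - h) * (∑ i ∈ s, x i) ^ h := by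
  have hp : 1 ≤ 1 / h := by rw [le_div_iff₀ h0]; linarith
  have := Real.rpow_sum_le_const_mul_sum_rpow s (fun i => x i ^ h) hp
  have hS : 0 ≤ ∑ i ∈ s, x i ^ h := Finset.sum_nonneg fun i hi => Real.rpow_nonneg (hx i hi) _
  have e1 : ∑ i ∈ s, |x i ^ h| = ∑ i ∈ s, x i ^ h :=
    Finset.sum_congr rfl fun i hi => abs_of_nonneg (Real.rpow_nonneg (hx i hi) _)
  have e2 : ∑ i ∈ s, |x i ^ h| ^ (1 / h) = ∑ i ∈ s, x i :=
    Finset.sum_congr rfl fun i hi => by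
      rw [abs_of_nonneg (Real.rpow_nonneg (hx i hi) _), ← Real.rpow_mul (hx i hi), mul_one_div_cancel h0.ne', Real.rpow_one]
  rw [e1, e2] at this
  have h2 := Real.rpow_le_rpow (Real.rpow_nonneg hS _) this h0.le
  rw [← Real.rpow_mul hS, one_div_mul_cancel h0.ne', Real.rpow_one,
    Real.mul_rpow (Real.rpow_nonneg (Nat.cast_nonneg _) _) (Finset.sum_nonneg hx), ← Real.rpow_mul (Nat.cast_nonneg _)] at h2
  have e3 : (1 / h - 1) * h = 1 - h := by field_simp
  rwa [e3] at h2

theorem telescope {F : ℝ → ℝ} (hF : StrictMonoOn F (Icc (0:ℝ) 1) ∨ StrictAntiOn F (Icc (0:ℝ) 1)) {t : ℕ → ℝ}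
    (ht : Antitone t) (hm : ∀ i, t i ∈ Icc (0:ℝ) 1) {a b : ℕ} (hab : a ≤ b) :
    ∑ i ∈ Finset.Ico a b, |F (t i) - F (t (i+1))| = |F (t a) - F (t b)| := by
  rcases hF with h | h
  · have h1 : ∀ i j, i ≤ j → F (t j) ≤ F (t i) := fun i j hij => h.monotoneOn (hm j) (hm i) (ht hij)
    rw [abs_of_nonneg (sub_nonneg.2 (h1 a b hab)), Finset.sum_congr rfl fun i _ => abs_of_nonneg (sub_nonneg.2 (h1 i (i+1) (by omega)))]
    have := Finset.sum_Ico_sub (fun i => F (t i)) hab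
    rw [← neg_inj, ← Finset.sum_neg_distrib]
    simp only [neg_sub]
    exact this
  · have h1 : ∀ i j, i ≤ j → F (t i) ≤ F (t j) := fun i j hij => h.antitoneOn (hm j) (hm i) (ht hij)
    rw [abs_of_nonpos (sub_nonpos.2 (h1 a b hab)), Finset.sum_congr rfl fun i _ => abs_of_nonpos (sub_nonpos.2 (h1 i (i+1) (by omega)))]
    simp only [neg_sub]
    exact Finset.sum_Ico_sub (fun i => F (t i)) hab

/-- additivity of increments of monotone functions -/
theorem incr_add {F : ℝ → ℝ} (hF : StrictMonoOn F (Icc (0:ℝ) 1) ∨ StrictAntiOn F (Icc (0:ℝ) 1)) {x y z : ℝ}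
    (hx : 0 ≤ x) (hxy : x ≤ y) (hyz : y ≤ z) (hz : z ≤ 1) : |F x - F y| + |F y - F z| = |F x - F z| := by
  have mx : x ∈ Icc (0:ℝ) 1 := ⟨hx, by linarith⟩
  have my : y ∈ Icc (0:ℝ) 1 := ⟨by linarith, by linarith⟩
  have mz : z ∈ Icc (0:ℝ) 1 := ⟨by linarith, by linarith⟩
  rcases hF with h | h
  · have a := h.monotoneOn mx my hxy
    have b := h.monotoneOn my mz hyz
    rw [abs_of_nonpos (by linarith), abs_of_nonpos (by linarith), abs_of_nonpos (by linarith)]; ring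
  · have a := h.antitoneOn mx my hxy
    have b := h.antitoneOn my mz hyz
    rw [abs_of_nonneg (by linarith), abs_of_nonneg (by linarith), abs_of_nonneg (by linarith)]; ring

/-- context -/
structure Ctx (S : NonlinearIFS) (n : ℕ) (h : ℝ) : Prop where
  hn : 2 ≤ n
  h0 : 0 < h
  h1 : h ≤ 1
  hd : dimH (S.J n) = ENNReal.ofReal h

namespace NonlinearIFS
variable (S : NonlinearIFS)

/-- restricted measure -/
def m (n : ℕ) (h : ℝ) : Measure ℝ := (μH[h] : Measure ℝ).restrict (S.J n)

/-- total mass -/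
def H (n : ℕ) (h : ℝ) : ℝ := (S.m n h).real (S.J n)

end NonlinearIFS

namespace Ctx
variable {S : NonlinearIFS} {n : ℕ} {h : ℝ} (X : Ctx S n h)
include X

theorem fin : IsFiniteMeasure (S.m n h) := by
  refine ⟨?_⟩
  rw [NonlinearIFS.m, Measure.restrict_apply_univ]
  exact S.H_lt_top X.hn X.h0 X.hd

theorem m_sub {A : Set ℝ} (hA : A ⊆ S.J n) : S.m n h A = μH[h] A := by
  rw [NonlinearIFS.m, Measure.restrict_apply' (S.J_compact n).measurableSet, inter_eq_left.2 hA]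

theorem H_pos : 0 < S.H n h := by
  have := X.fin
  rw [NonlinearIFS.H, measureReal_def, X.m_sub subset_rfl]
  exact ENNReal.toReal_pos (S.H_pos X.h0 X.hd).ne' (S.H_lt_top X.hn X.h0 X.hd).ne

theorem ofReal_H : ENNReal.ofReal (S.H n h) = μH[h] (S.J n) := by
  rw [NonlinearIFS.H, measureReal_def, X.m_sub subset_rfl, ENNReal.ofReal_toReal (S.H_lt_top X.hn X.h0 X.hd).ne]

theorem m_le_H (A : Set ℝ) : (S.m n h).real A ≤ S.H n h := by
  have := X.fin
  have e : (S.m n h).real A = (S.m n h).real (A ∩ S.J n) := by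
    rw [measureReal_def, measureReal_def, NonlinearIFS.m, Measure.restrict_apply' (S.J_compact n).measurableSet,
      Measure.restrict_apply' (S.J_compact n).measurableSet, inter_assoc, inter_self]
  rw [e]
  exact measureReal_mono inter_subset_right

theorem m_lip {A B : Set ℝ} (hA : A ⊆ S.J n) (hB : B ⊆ S.J n) {F : ℝ → ℝ} {ρ : ℝ} (hρ : 0 ≤ ρ) (hBA : B ⊆ F '' A)
    (hF : ∀ x ∈ A, ∀ y ∈ A, |F x - F y| ≤ ρ * |x - y|) : (S.m n h).real B ≤ ρ ^ h * (S.m n h).real A := by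
  have hfin := X.fin
  have hL : LipschitzOnWith ρ.toNNReal F A := LipschitzOnWith.of_dist_le_mul fun x hx y hy => by
    rw [Real.dist_eq, Real.dist_eq, Real.coe_toNNReal _ hρ]; exact hF x hx y hy
  have h1 := (measure_mono hBA).trans (hL.hausdorffMeasure_image_le X.h0.le)
  rw [← X.m_sub hA, ← X.m_sub hB] at h1
  have h2 := ENNReal.toReal_mono (by
    refine ENNReal.mul_ne_top (ENNReal.rpow_ne_top_of_nonneg X.h0.le ENNReal.coe_ne_top) (measure_ne_top _ _)) h1
  rw [ENNReal.toReal_mul, ← ENNReal.toReal_rpow, ENNReal.coe_toReal, Real.coe_toNNReal _ hρ] at h2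
  exact h2

theorem m_upper {w : List ℕ} (hw : VW n w) {κ : ℝ} (hκ : 0 ≤ κ) (hD : DistOn (S.f w) (Icc 0 1) κ) {A : Set ℝ} (hA : A ⊆ S.J n) :
    (S.m n h).real (S.f w '' A) ≤ (κ * S.len w) ^ h * (S.m n h).real A := by
  refine X.m_lip hA (by rintro _ ⟨x, hx, rfl⟩; exact S.f_J hw (hA hx)) (mul_nonneg hκ (S.len_nonneg _)) subset_rfl ?_
  intro x hx y hy
  exact S.dist_upper hD (S.J_sub01 (hA hx)) (S.J_sub01 (hA hy))

theorem m_lower {w : List ℕ} (hw : VW n w) {κ : ℝ} (hκ : 0 < κ) (hD : DistOn (S.f w) (Icc 0 1) κ) :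
    (S.len w / κ) ^ h * S.H n h ≤ (S.m n h).real (S.f w '' S.J n) := by
  have hl := S.len_pos hw.W
  have hsub : S.f w '' S.J n ⊆ S.J n := by rintro _ ⟨x, hx, rfl⟩; exact S.f_J hw hx
  have hinv : ∀ x ∈ S.J n, Function.invFunOn (S.f w) (Icc 0 1) (S.f w x) = x := fun x hx =>
    (S.f_inj hw.W).leftInvOn_invFunOn (S.J_sub01 hx)
  have := X.m_lip (A := S.f w '' S.J n) (B := S.J n) (F := Function.invFunOn (S.f w) (Icc 0 1)) (ρ := κ / S.len w)
    hsub subset_rfl (by positivity) (by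
      intro x hx
      exact ⟨S.f w x, ⟨x, hx, rfl⟩, hinv x hx⟩) (by
      rintro _ ⟨x, hx, rfl⟩ _ ⟨y, hy, rfl⟩
      rw [hinv x hx, hinv y hy]
      have := S.dist_lower hD (S.J_sub01 hx) (S.J_sub01 hy)
      rw [div_mul_eq_mul_div, le_div_iff₀ hl]
      linarith)
  have e : (S.len w / κ) ^ h * (κ / S.len w) ^ h = 1 := by
    rw [← Real.mul_rpow (by positivity) (by positivity)]
    have : S.len w / κ * (κ / S.len w) = 1 := by field_simp
    rw [this, Real.one_rpow]
  calc (S.len w / κ) ^ h * S.H n h ≤ (S.len w / κ) ^ h * ((κ / S.len w) ^ h * (S.m n h).real (S.f w '' S.J n)) :=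
        mul_le_mul_of_nonneg_left this (by positivity)
    _ = _ := by rw [← mul_assoc, e, one_mul]

end Ctx

namespace NonlinearIFS
variable (S : NonlinearIFS)

theorem len_snoc (w : List ℕ) (i : ℕ) : S.len (w ++ [i+1]) = |S.f w (S.b i) - S.f w (S.b (i+1))| := by
  rw [len, f_snoc, f_snoc, S.g_zero _ (by omega), S.g_one _ (by omega)]; rfl

theorem fJ_union {n : ℕ} (w : List ℕ) : S.f w '' S.J n = ⋃ i ∈ Finset.Ico 0 n, S.f (w ++ [i+1]) '' S.J n := by
  ext x
  simp only [mem_iUnion, exists_prop, Finset.mem_Ico]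
  constructor
  · rintro ⟨y, hy, rfl⟩
    obtain ⟨k, h1, h2, z, hz, rfl⟩ := S.J_self hy
    refine ⟨k - 1, by omega, z, hz, ?_⟩
    rw [Nat.sub_add_cancel h1, f_snoc]
  · rintro ⟨i, hi, y, hy, rfl⟩
    exact ⟨S.g (i+1) y, S.g_J (by omega) (by omega) hy, (S.f_snoc _ _ _).symm⟩

end NonlinearIFS

namespace Ctx
variable {S : NonlinearIFS} {n : ℕ} {h : ℝ} (X : Ctx S n h)
include X

theorem m_fJ {w : List ℕ} (hw : VW n w) : (S.m n h).real (S.f w '' S.J n) =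
    ∑ i ∈ Finset.Ico 0 n, (S.m n h).real (S.f (w ++ [i+1]) '' S.J n) := by
  have := X.fin
  rw [S.fJ_union w, measureReal_biUnion_finset]
  · intro i hi j hj hij
    have hi := Finset.mem_Ico.1 hi
    have hj := Finset.mem_Ico.1 hj
    rw [Function.onFun, Set.disjoint_left]
    rintro _ ⟨x, hx, rfl⟩ ⟨y, hy, hxy⟩
    have := S.f_disj (by simp) (hw.snoc (by omega) (by omega)) (hw.snoc (by omega) (by omega)) hx hy hxy.symm
    simp at this
    exact hij this
  · intro i hi
    have hi := Finset.mem_Ico.1 hi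
    exact (S.fJ_compact (hw.snoc (by omega) (by omega))).measurableSet

/-- One step of the lower density estimate. -/
theorem step_lower {κ : ℝ} (hκ : 1 ≤ κ) {N : ℕ} (hN : ∀ k, N < k → ∀ w, NonlinearIFS.W w → DistOn (S.f (w ++ [k])) (Icc 0 1) κ)
    (hNn : N ≤ n) {a : ℝ} (ha : 0 ≤ a) (haP : a ≤ S.H n h / κ)
    (R : ∀ w, VW n w → a * S.len w ^ h ≤ (S.m n h).real (S.f w '' S.J n)) {w : List ℕ} (hw : VW n w) :
    (a * (1 - S.b N / S.K) + S.H n h / κ * (S.b N / S.K - S.K * S.b n)) * S.len w ^ h ≤ (S.m n h).real (S.f w '' S.J n) := by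
  have hL := S.len_pos hw.W
  have hκ0 : 0 < κ := by linarith
  have hH := X.H_pos
  set L := S.len w with hLdef
  set P := S.H n h / κ with hP
  have hP0 : 0 < P := div_pos hH hκ0
  set l : ℕ → ℝ := fun i => S.len (w ++ [i+1]) with hl
  have hl' : ∀ i, l i = |S.f w (S.b i) - S.f w (S.b (i+1))| := fun i => S.len_snoc w i
  have hmono := S.f_mono hw.W
  have sum1 : ∑ i ∈ Finset.Ico 0 N, l i = |S.f w 1 - S.f w (S.b N)| := by
    simp only [hl']
    rw [telescope hmono S.b_anti.antitone S.b_mem (Nat.zero_le N), S.b_zero]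
  have sum2 : ∑ i ∈ Finset.Ico N n, l i = |S.f w (S.b N) - S.f w (S.b n)| := by
    simp only [hl']
    rw [telescope hmono S.b_anti.antitone S.b_mem hNn]
  have add1 := incr_add hmono le_rfl (S.b_mem n).1 (S.b_anti.antitone hNn) (S.b_mem N).2
  have add2 := incr_add hmono le_rfl (S.b_mem N).1 (S.b_mem N).2 le_rfl
  have gap1 : |S.f w 0 - S.f w (S.b n)| ≤ S.K * L * S.b n := by
    have := S.dist_upper (S.dist_K hw.W) (x := 0) (y := S.b n) (by simp) (S.b_mem n)
    rwa [zero_sub, abs_neg, abs_of_pos (S.b_pos n)] at this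
  have gap2 : L * S.b N ≤ S.K * |S.f w 0 - S.f w (S.b N)| := by
    have := S.dist_lower (S.dist_K hw.W) (x := 0) (y := S.b N) (by simp) (S.b_mem N)
    rwa [zero_sub, abs_neg, abs_of_pos (S.b_pos N)] at this
  have gap2' : L * (S.b N / S.K) ≤ |S.f w 0 - S.f w (S.b N)| := by
    rw [mul_div_assoc', div_le_iff₀ S.K_pos]; linarith
  have hLe : |S.f w 0 - S.f w 1| = L := rfl
  rw [hLe] at add2
  rw [abs_sub_comm (S.f w 1)] at sum1
  rw [abs_sub_comm (S.f w (S.b n))] at add1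
  -- pieces
  have hli : ∀ i, 0 ≤ l i := fun i => S.len_nonneg _
  have hle : ∀ i ∈ Finset.Ico 0 n, L ^ h * (l i / L) ≤ l i ^ h := by
    intro i hi
    have h1 : l i ≤ L := by
      have h2 : l i ≤ ∑ i ∈ Finset.Ico 0 n, l i := Finset.single_le_sum (fun i _ => hli i) hi
      rw [← Finset.sum_Ico_consecutive _ (Nat.zero_le N) hNn, sum1, sum2] at h2
      linarith [abs_nonneg (S.f w 0 - S.f w (S.b n))]
    have h2 := le_rpow_self (div_nonneg (hli i) hL.le) X.h0 X.h1 ((div_le_one hL).2 h1)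
    calc L ^ h * (l i / L) ≤ L ^ h * (l i / L) ^ h := mul_le_mul_of_nonneg_left h2 (Real.rpow_nonneg hL.le _)
      _ = _ := by rw [← Real.mul_rpow hL.le (div_nonneg (hli i) hL.le), mul_div_cancel₀ _ hL.ne']
  have b1 : ∀ i ∈ Finset.Ico 0 N, a * (L ^ h * (l i / L)) ≤ (S.m n h).real (S.f (w ++ [i+1]) '' S.J n) := by
    intro i hi
    have hi' := Finset.mem_Ico.1 hi
    refine le_trans ?_ (R _ (hw.snoc (by omega) (by omega)))
    exact mul_le_mul_of_nonneg_left (hle i (Finset.mem_Ico.2 ⟨by omega, by omega⟩)) ha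
  have b2 : ∀ i ∈ Finset.Ico N n, P * (L ^ h * (l i / L)) ≤ (S.m n h).real (S.f (w ++ [i+1]) '' S.J n) := by
    intro i hi
    have hi' := Finset.mem_Ico.1 hi
    refine le_trans ?_ (X.m_lower (hw.snoc (by omega) (by omega)) hκ0 (hN (i+1) (by omega) w hw.W))
    rw [Real.div_rpow (hli i) hκ0.le]
    have h3 : κ ^ h ≤ κ := by
      have := Real.rpow_le_rpow_of_exponent_le hκ X.h1
      rwa [Real.rpow_one] at this
    have h4 := hle i (Finset.mem_Ico.2 ⟨by omega, by omega⟩)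
    calc P * (L ^ h * (l i / L)) ≤ P * (l i ^ h) := mul_le_mul_of_nonneg_left h4 hP0.le
      _ = l i ^ h / κ * S.H n h := by rw [hP]; ring
      _ ≤ l i ^ h / κ ^ h * S.H n h := by
          refine mul_le_mul_of_nonneg_right ?_ hH.le
          exact div_le_div_of_nonneg_left (Real.rpow_nonneg (hli i) _) (Real.rpow_pos_of_pos hκ0 _) h3
  rw [X.m_fJ hw, ← Finset.sum_Ico_consecutive _ (Nat.zero_le N) hNn]
  refine le_trans ?_ (add_le_add (Finset.sum_le_sum b1) (Finset.sum_le_sum b2))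
  rw [← Finset.mul_sum, ← Finset.mul_sum, ← Finset.mul_sum, ← Finset.mul_sum, ← Finset.sum_div, ← Finset.sum_div,
    sum1, sum2]
  set Y := |S.f w 0 - S.f w (S.b N)|
  set Z := |S.f w 0 - S.f w (S.b n)|
  have e1 : |S.f w (S.b N) - S.f w 1| = L - Y := by linarith
  have e2 : |S.f w (S.b N) - S.f w (S.b n)| = Y - Z := by linarith
  rw [e1, e2]
  have hy : S.b N / S.K ≤ Y / L := by rw [le_div_iff₀ hL]; linarith
  have hz : Z / L ≤ S.K * S.b n := by rw [div_le_iff₀ hL]; linarith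
  have : a * (1 - S.b N / S.K) + P * (S.b N / S.K - S.K * S.b n) ≤ a * ((L - Y) / L) + P * ((Y - Z) / L) := by
    rw [sub_div, sub_div, div_self hL.ne']
    nlinarith [mul_nonneg (sub_nonneg.2 haP) (sub_nonneg.2 hy), mul_nonneg hP0.le (sub_nonneg.2 hz)]
  calc _ ≤ (a * ((L - Y) / L) + P * ((Y - Z) / L)) * L ^ h := mul_le_mul_of_nonneg_right this (Real.rpow_nonneg hL.le _)
    _ = _ := by ring

theorem upper {κ : ℝ} (hκ : 1 ≤ κ) {N : ℕ} (hN : ∀ k, N < k → ∀ w, NonlinearIFS.W w → DistOn (S.f (w ++ [k])) (Icc 0 1) κ)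
    (hNn : N ≤ n) (hs : 0 < 1 - S.K ^ 2 * S.b n / S.b N) :
    S.H n h ≤ κ / (1 - S.K ^ 2 * S.b n / S.b N) := by
  have hκ0 : 0 < κ := by linarith
  have hH := X.H_pos
  have hK := S.K_pos
  have hbN := S.b_pos N
  set P := S.H n h / κ with hP
  have hP0 : 0 < P := div_pos hH hκ0
  set θ := 1 - S.K ^ 2 * S.b n / S.b N with hθ
  have hθ1 : θ ≤ 1 := by
    have := S.b_pos n
    have : 0 ≤ S.K ^ 2 * S.b n / S.b N := by positivity
    linarith
  have hqe : S.b N / S.K - S.K * S.b n = S.b N / S.K * θ := by rw [hθ]; field_simp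
  have hq : 0 < S.b N / S.K := by positivity
  let T : Set ℝ := (fun w => (S.m n h).real (S.f w '' S.J n) / S.len w ^ h) '' {w | VW n w}
  have hTne : T.Nonempty := ⟨_, [], VW.nil n, rfl⟩
  have hTb : BddBelow T := ⟨0, by
    rintro _ ⟨w, hw, rfl⟩
    exact div_nonneg measureReal_nonneg (Real.rpow_nonneg (S.len_nonneg _) _)⟩
  have hlen : ∀ w, VW n w → 0 < S.len w ^ h := fun w hw => Real.rpow_pos_of_pos (S.len_pos hw.W) _
  have hiff : ∀ a, (∀ w, VW n w → a * S.len w ^ h ≤ (S.m n h).real (S.f w '' S.J n)) ↔ a ∈ lowerBounds T := by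
    intro a
    constructor
    · rintro hR _ ⟨w, hw, rfl⟩
      rw [le_div_iff₀ (hlen w hw)]; exact hR w hw
    · intro ha w hw
      rw [← le_div_iff₀ (hlen w hw)]
      exact ha ⟨w, hw, rfl⟩
  have ha0 : 0 ≤ sInf T := le_csInf hTne (by
    rintro _ ⟨w, hw, rfl⟩
    exact div_nonneg measureReal_nonneg (Real.rpow_nonneg (S.len_nonneg _) _))
  have hR := (hiff (sInf T)).2 fun x hx => csInf_le hTb hx
  have key : P * θ ≤ sInf T := by
    by_cases hc : P ≤ sInf T
    · nlinarith
    push Not at hc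
    have h1 := fun w hw => X.step_lower hκ hN hNn ha0 hc.le hR (w := w) hw
    have h2 := le_csInf hTne ((hiff _).1 h1)
    rw [hqe] at h2
    have h3 : (P * θ - sInf T) * (S.b N / S.K) ≤ 0 := by rw [← hP] at h2; nlinarith
    nlinarith
  have hPθ : 0 < P * θ := mul_pos hP0 hs
  have := S.H_le_of_sum (n := n) (h := h) X.h0 (B := S.H n h / (P * θ)) (by
    intro l _
    rw [le_div_iff₀ hPθ, Finset.sum_mul]
    have hf := X.fin
    calc ∑ w ∈ words n l, S.len w ^ h * (P * θ) ≤ ∑ w ∈ words n l, (S.m n h).real (S.f w '' S.J n) := by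
          refine Finset.sum_le_sum fun w hw => ?_
          have hw := (mem_words.1 hw).2
          refine le_trans ?_ (hR w hw)
          rw [mul_comm]
          exact mul_le_mul_of_nonneg_right key (hlen w hw).le
      _ = (S.m n h).real (⋃ w ∈ words n l, S.f w '' S.J n) := by
          rw [measureReal_biUnion_finset]
          · intro w hw v hv hwv
            have hw := mem_words.1 hw
            have hv := mem_words.1 hv
            rw [Function.onFun, Set.disjoint_left]
            rintro _ ⟨x, hx, rfl⟩ ⟨y, hy, hxy⟩
            exact hwv (S.f_disj (by omega) hw.2 hv.2 hx hy hxy.symm)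
          · intro w hw
            exact (S.fJ_compact (mem_words.1 hw).2).measurableSet
      _ ≤ _ := X.m_le_H _)
  rw [← X.ofReal_H] at this
  have := (ENNReal.ofReal_le_ofReal_iff (by positivity)).1 this
  refine this.trans_eq ?_
  rw [hP]
  field_simp

end Ctx

end Part5

section Part6

namespace NonlinearIFS
variable (S : NonlinearIFS)

/-- clamped partition points -/
def tt (p q : ℝ) (i : ℕ) : ℝ := max p (min (S.b i) q)

theorem tt_anti (p q : ℝ) : Antitone (S.tt p q) := fun i j hij =>
  max_le_max le_rfl (min_le_min (S.b_anti.antitone hij) le_rfl)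

theorem tt_mem {p q : ℝ} (hpq : p ≤ q) (i : ℕ) : S.tt p q i ∈ Icc p q :=
  ⟨le_max_left _ _, max_le hpq (min_le_right _ _)⟩

/-- the part of the cylinder lying over `[p,q]` -/
def pc (n : ℕ) (p q : ℝ) (i : ℕ) : Set ℝ := {y | y ∈ S.J n ∧ S.g (i+1) y ∈ Icc p q}

theorem pc_sub {n : ℕ} {p q : ℝ} {i : ℕ} : S.pc n p q i ⊆ S.J n := fun _ hy => hy.1

theorem pc_union {n : ℕ} (w : List ℕ) (p q : ℝ) :
    S.f w '' (S.J n ∩ Icc p q) ⊆ ⋃ i ∈ Finset.Ico 0 n, S.f (w ++ [i+1]) '' S.pc n p q i := by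
  rintro _ ⟨x, ⟨hx, hxpq⟩, rfl⟩
  obtain ⟨k, h1, h2, z, hz, rfl⟩ := S.J_self hx
  simp only [mem_iUnion, exists_prop, Finset.mem_Ico]
  refine ⟨k - 1, by omega, z, ⟨hz, ?_⟩, ?_⟩
  · rwa [Nat.sub_add_cancel h1]
  · rw [Nat.sub_add_cancel h1, f_snoc]

theorem pc_spec {n : ℕ} {p q : ℝ} {i : ℕ} (hne : (S.pc n p q i).Nonempty) :
    ∃ y1 y2, 0 ≤ y1 ∧ y1 ≤ y2 ∧ y2 ≤ 1 ∧ S.g (i+1) y1 = S.tt p q i ∧ S.g (i+1) y2 = S.tt p q (i+1) ∧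
      S.pc n p q i ⊆ S.J n ∩ Icc y1 y2 ∧ S.tt p q i = min (S.b i) q ∧ S.tt p q (i+1) = max p (S.b (i+1)) ∧
      S.b (i+1) < q ∧ p < S.b i := by
  obtain ⟨y, hy, hpq⟩ := hne
  have hI := S.g_J_Ioo (k := i+1) (by omega) hy
  simp only [Nat.add_sub_cancel] at hI
  have e1 : S.tt p q i = min (S.b i) q := max_eq_right (le_min (hpq.1.trans hI.2.le) (hpq.1.trans hpq.2))
  have e2 : S.tt p q (i+1) = max p (S.b (i+1)) := by
    unfold tt; rw [min_eq_left (hI.1.le.trans hpq.2)]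
  have hb : S.b (i+1) < S.b i := S.b_anti (Nat.lt_succ_self i)
  have im := S.g_image (i+1) (by omega)
  simp only [Nat.add_sub_cancel] at im
  have ht : S.tt p q (i+1) ≤ S.tt p q i := S.tt_anti p q (Nat.le_succ i)
  have m1 : S.tt p q i ∈ S.g (i+1) '' Icc 0 1 := by
    rw [im]; refine ⟨le_trans ?_ ht, ?_⟩
    · rw [e2]; exact le_max_right _ _
    · rw [e1]; exact min_le_left _ _
  have m2 : S.tt p q (i+1) ∈ S.g (i+1) '' Icc 0 1 := by
    rw [im]; refine ⟨?_, ht.trans ?_⟩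
    · rw [e2]; exact le_max_right _ _
    · rw [e1]; exact min_le_left _ _
  obtain ⟨y1, hy1, f1⟩ := m1
  obtain ⟨y2, hy2, f2⟩ := m2
  have ga := S.g_anti (i+1) (by omega)
  refine ⟨y1, y2, hy1.1, ?_, hy2.2, f1, f2, ?_, e1, e2, hI.1.trans_le hpq.2, hpq.1.trans_lt hI.2⟩
  · rw [← ga.le_iff_ge hy2 hy1, f1, f2]; exact ht
  · rintro z ⟨hz, hzpq⟩
    have hzI := S.g_J_Ioo (k := i+1) (by omega) hz
    simp only [Nat.add_sub_cancel] at hzI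
    refine ⟨hz, ?_, ?_⟩
    · rw [← ga.le_iff_ge (S.J_sub01 hz) hy1, f1, e1]; exact le_min hzI.2.le hzpq.2
    · rw [← ga.le_iff_ge hy2 (S.J_sub01 hz), f2, e2]; exact max_le hzpq.1 hzI.1.le

theorem g_eq_zero {i : ℕ} {y : ℝ} (hy : y ∈ Icc (0:ℝ) 1) (h : S.g (i+1) y = S.b i) : y = 0 := by
  refine (S.g_anti (i+1) (by omega)).injOn hy (by simp) ?_
  rw [h, S.g_zero _ (by omega)]; rfl

theorem g_eq_one {i : ℕ} {y : ℝ} (hy : y ∈ Icc (0:ℝ) 1) (h : S.g (i+1) y = S.b (i+1)) : y = 1 := by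
  refine (S.g_anti (i+1) (by omega)).injOn hy (by simp) ?_
  rw [h, S.g_one _ (by omega)]

/-- increment over a piece -/
def inc (w : List ℕ) (p q : ℝ) (i : ℕ) : ℝ := |S.f w (S.tt p q i) - S.f w (S.tt p q (i+1))|

theorem inc_nonneg (w : List ℕ) (p q : ℝ) (i : ℕ) : 0 ≤ S.inc w p q i := abs_nonneg _

theorem sum_inc_le {w : List ℕ} (hw : W w) {p q : ℝ} (hp : 0 ≤ p) (hpq : p ≤ q) (hq : q ≤ 1) (n : ℕ) :
    ∑ i ∈ Finset.Ico 0 n, S.inc w p q i ≤ |S.f w p - S.f w q| := by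
  have hmono := S.f_mono hw
  unfold inc
  rw [telescope hmono (S.tt_anti p q) (fun i => ⟨hp.trans (S.tt_mem hpq i).1, (S.tt_mem hpq i).2.trans hq⟩) (Nat.zero_le n)]
  have e : S.tt p q 0 = q := by
    unfold tt; rw [S.b_zero, min_eq_right hq, max_eq_right hpq]
  rw [e, abs_sub_comm]
  have := incr_add hmono hp (S.tt_mem hpq n).1 (S.tt_mem hpq n).2 hq
  linarith [abs_nonneg (S.f w p - S.f w (S.tt p q n))]

def P0 (n : ℕ) (h A : ℝ) : Prop := ∀ w, VW n w → ∀ s ∈ Icc (0:ℝ) 1,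
  (S.m n h).real (S.f w '' (S.J n ∩ Icc 0 s)) ≤ A * |S.f w 0 - S.f w s| ^ h

def P1 (n : ℕ) (h A : ℝ) : Prop := ∀ w, VW n w → ∀ s ∈ Icc (0:ℝ) 1,
  (S.m n h).real (S.f w '' (S.J n ∩ Icc s 1)) ≤ A * |S.f w s - S.f w 1| ^ h

def nu (n : ℕ) (h : ℝ) : ℝ := (n : ℝ) ^ (1 - h)

end NonlinearIFS

open NonlinearIFS

namespace Ctx
variable {S : NonlinearIFS} {n : ℕ} {h : ℝ} (X : Ctx S n h)
include X

theorem one_le_nu : 1 ≤ nu n h := by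
  have := X.hn
  exact Real.one_le_rpow (by exact_mod_cast (by omega : 1 ≤ n)) (by linarith [X.h1])

theorem sum_le_nu {s : Finset ℕ} (hs : s.card ≤ n) {x : ℕ → ℝ} (hx : ∀ i ∈ s, 0 ≤ x i) :
    ∑ i ∈ s, x i ^ h ≤ nu n h * (∑ i ∈ s, x i) ^ h := by
  refine (sum_rpow_le s x hx X.h0 X.h1).trans ?_
  refine mul_le_mul_of_nonneg_right ?_ (Real.rpow_nonneg (Finset.sum_nonneg hx) _)
  exact Real.rpow_le_rpow (Nat.cast_nonneg _) (by exact_mod_cast hs) (by linarith [X.h1])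

theorem m_pc (w : List ℕ) (p q : ℝ) : (S.m n h).real (S.f w '' (S.J n ∩ Icc p q)) ≤
    ∑ i ∈ Finset.Ico 0 n, (S.m n h).real (S.f (w ++ [i+1]) '' S.pc n p q i) := by
  have := X.fin
  exact (measureReal_mono (S.pc_union w p q) (measure_ne_top _ _)).trans (measureReal_biUnion_finset_le _ _)

/-- sum of piecewise bounds -/
theorem sum_pc {w : List ℕ} (hw : VW n w) {p q : ℝ} (hp : 0 ≤ p) (hpq : p ≤ q) (hq : q ≤ 1) {A : ℝ} (hA : 0 ≤ A)
    (hpc : ∀ i ∈ Finset.Ico 0 n, (S.m n h).real (S.f (w ++ [i+1]) '' S.pc n p q i) ≤ A * S.inc w p q i ^ h) :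
    (S.m n h).real (S.f w '' (S.J n ∩ Icc p q)) ≤ nu n h * A * |S.f w p - S.f w q| ^ h := by
  have hnu := X.one_le_nu
  refine (X.m_pc w p q).trans ((Finset.sum_le_sum hpc).trans ?_)
  rw [← Finset.mul_sum, mul_comm (nu n h), mul_assoc]
  refine mul_le_mul_of_nonneg_left ?_ hA
  refine (X.sum_le_nu (by simp) fun i _ => S.inc_nonneg w p q i).trans ?_
  refine mul_le_mul_of_nonneg_left ?_ (by linarith)
  exact Real.rpow_le_rpow (Finset.sum_nonneg fun i _ => S.inc_nonneg w p q i) (S.sum_inc_le hw.W hp hpq hq n) X.h0.le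

theorem pc_P0 {A : ℝ} (h0 : S.P0 n h A) {w : List ℕ} (hw : VW n w) {p q : ℝ} {i : ℕ} (hi : i < n)
    (hne : (S.pc n p q i).Nonempty) (ht : S.b i ≤ q) :
    (S.m n h).real (S.f (w ++ [i+1]) '' S.pc n p q i) ≤ A * S.inc w p q i ^ h := by
  have hf := X.fin
  obtain ⟨y1, y2, a1, a2, a3, a4, a5, a6, a7, a8, -, -⟩ := S.pc_spec hne
  rw [min_eq_left ht] at a7
  have : y1 = 0 := S.g_eq_zero ⟨a1, a2.trans a3⟩ (a4.trans a7)
  subst this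
  have := h0 _ (hw.snoc (k := i+1) (by omega) (by omega)) y2 ⟨a2, a3⟩
  rw [S.f_snoc, S.f_snoc, a4, a5] at this
  exact (measureReal_mono (image_mono a6)).trans this

theorem pc_P1 {A : ℝ} (h0 : S.P1 n h A) {w : List ℕ} (hw : VW n w) {p q : ℝ} {i : ℕ} (hi : i < n)
    (hne : (S.pc n p q i).Nonempty) (ht : p ≤ S.b (i+1)) :
    (S.m n h).real (S.f (w ++ [i+1]) '' S.pc n p q i) ≤ A * S.inc w p q i ^ h := by
  have hf := X.fin
  obtain ⟨y1, y2, a1, a2, a3, a4, a5, a6, a7, a8, -, -⟩ := S.pc_spec hne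
  rw [max_eq_right ht] at a8
  have : y2 = 1 := S.g_eq_one ⟨a1.trans a2, a3⟩ (a5.trans a8)
  subst this
  have := h0 _ (hw.snoc (k := i+1) (by omega) (by omega)) y1 ⟨a1, a2⟩
  rw [S.f_snoc, S.f_snoc, a4, a5] at this
  exact (measureReal_mono (image_mono a6)).trans this

/-- U3 -/
theorem P1_of_P0 {A : ℝ} (hA : 0 ≤ A) (h0 : S.P0 n h A) : S.P1 n h (nu n h * A) := by
  intro w hw s hs
  refine X.sum_pc hw hs.1 hs.2 le_rfl hA fun i hi => ?_
  by_cases hne : (S.pc n s 1 i).Nonempty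
  · exact X.pc_P0 h0 hw (Finset.mem_Ico.1 hi).2 hne (S.b_le_one i)
  · rw [not_nonempty_iff_eq_empty.1 hne, image_empty, measureReal_empty]
    exact mul_nonneg hA (Real.rpow_nonneg (S.inc_nonneg _ _ _ _) _)

theorem kappa_rpow {κ : ℝ} (hκ : 1 ≤ κ) : κ ^ h ≤ κ := by
  have := Real.rpow_le_rpow_of_exponent_le hκ X.h1
  rwa [Real.rpow_one] at this

theorem full {κ : ℝ} (hκ : 1 ≤ κ) {N : ℕ} (hN : ∀ k, N < k → ∀ w, W w → DistOn (S.f (w ++ [k])) (Icc 0 1) κ)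
    {w : List ℕ} (hw : VW n w) {i : ℕ} (hi : i < n) (hNi : N ≤ i) {A : Set ℝ} (hA : A ⊆ S.J n) :
    (S.m n h).real (S.f (w ++ [i+1]) '' A) ≤ κ * S.H n h * |S.f w (S.b i) - S.f w (S.b (i+1))| ^ h := by
  have hf := X.fin
  have hH := X.H_pos
  have hv := hw.snoc (k := i+1) (by omega) (by omega)
  have h1 := X.m_upper hv (by linarith) (hN (i+1) (by omega) w hw.W) hA
  have h2 : (S.m n h).real A ≤ S.H n h := X.m_le_H A
  rw [S.len_snoc, Real.mul_rpow (by linarith) (abs_nonneg _)] at h1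
  refine h1.trans ?_
  have h3 : 0 ≤ |S.f w (S.b i) - S.f w (S.b (i+1))| ^ h := Real.rpow_nonneg (abs_nonneg _) _
  have h4 := X.kappa_rpow hκ
  calc _ ≤ κ * |S.f w (S.b i) - S.f w (S.b (i+1))| ^ h * S.H n h :=
        mul_le_mul (mul_le_mul_of_nonneg_right h4 h3) h2 measureReal_nonneg (by positivity)
    _ = _ := by ring

/-- U2 -/
theorem small_s {κ η : ℝ} (hκ : 1 ≤ κ) (hη : 1 ≤ η) {N : ℕ} (hN : ∀ k, N < k → ∀ w, W w → DistOn (S.f (w ++ [k])) (Icc 0 1) κ)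
    (hr : ∀ i, N ≤ i → 1 + S.K * (S.b i / S.b (i+1) - 1) ≤ η) {w : List ℕ} (hw : VW n w) {s : ℝ} (hs0 : 0 < s) (hs : s < S.b N) :
    (S.m n h).real (S.f w '' (S.J n ∩ Icc 0 s)) ≤ (κ * nu n h * η * S.H n h) * |S.f w 0 - S.f w s| ^ h := by
  have hf := X.fin
  have hH := X.H_pos
  have hnu := X.one_le_nu
  have hs1 : s ≤ 1 := hs.le.trans (S.b_le_one N)
  have hex : ∃ i, S.b (i+1) < s := by
    have := (S.b_lim.comp (tendsto_add_atTop_nat 1)).eventually_lt_const hs0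
    exact this.exists
  classical
  obtain ⟨i0, hi0, hmin⟩ : ∃ i0, S.b (i0+1) < s ∧ ∀ i < i0, s ≤ S.b (i+1) :=
    ⟨Nat.find hex, Nat.find_spec hex, fun i hi => not_lt.1 (Nat.find_min hex hi)⟩
  have hsi : s ≤ S.b i0 := by
    rcases Nat.eq_zero_or_pos i0 with h | h
    · rw [h, S.b_zero]; exact hs1
    · have := hmin (i0 - 1) (by omega)
      rwa [Nat.sub_add_cancel h] at this
  have hNi : N ≤ i0 := by
    by_contra hc
    have : S.b N ≤ S.b (i0+1) := S.b_anti.antitone (by omega)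
    linarith
  have hemp : ∀ i, i < i0 → S.pc n 0 s i = ∅ := by
    intro i hi
    by_contra hne
    obtain ⟨y1, y2, -, -, -, -, -, -, -, -, h9, -⟩ := S.pc_spec (nonempty_iff_ne_empty.2 hne)
    linarith [hmin i hi]
  have hmono := S.f_mono hw.W
  refine (X.m_pc w 0 s).trans ?_
  have step1 : ∑ i ∈ Finset.Ico 0 n, (S.m n h).real (S.f (w ++ [i+1]) '' S.pc n 0 s i) ≤
      ∑ i ∈ Finset.Ico i0 n, κ * S.H n h * |S.f w (S.b i) - S.f w (S.b (i+1))| ^ h := by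
    rw [← Finset.sum_subset (s₁ := Finset.Ico i0 n) (Finset.Ico_subset_Ico (Nat.zero_le _) le_rfl)]
    · refine Finset.sum_le_sum fun i hi => ?_
      have hi := Finset.mem_Ico.1 hi
      exact X.full hκ hN hw hi.2 (by omega) S.pc_sub
    · intro i hi hni
      rw [hemp i (by simp at hi hni; omega), image_empty, measureReal_empty]
  refine step1.trans ?_
  rw [← Finset.mul_sum]
  have hD := S.dist_K hw.W
  have hsm : s ∈ Icc (0:ℝ) 1 := ⟨hs0.le, hs1⟩
  have h5 := hD s hsm (S.b i0) (S.b_mem i0) 0 (by simp) s hsm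
  rw [zero_sub, abs_neg, abs_of_pos hs0, abs_of_nonpos (sub_nonpos.2 hsi)] at h5
  have h6 : |S.f w 0 - S.f w (S.b i0)| ≤ η * |S.f w 0 - S.f w s| := by
    rw [← incr_add hmono le_rfl hs0.le hsi (S.b_mem i0).2]
    set D := |S.f w 0 - S.f w s|
    have hD0 : 0 ≤ D := abs_nonneg _
    have h7 : |S.f w s - S.f w (S.b i0)| ≤ S.K * (D * ((S.b i0 - s) / s)) := by
      rw [← mul_le_mul_iff_of_pos_right hs0]
      refine h5.trans_eq ?_
      field_simp
      ring
    have h8 : (S.b i0 - s) / s ≤ S.b i0 / S.b (i0+1) - 1 := by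
      rw [sub_div, div_self hs0.ne']
      have := div_le_div_of_nonneg_left (S.b_pos i0).le (S.b_pos (i0+1)) hi0.le
      linarith
    have h9 := hr i0 hNi
    have h10 : S.K * (D * ((S.b i0 - s) / s)) ≤ S.K * (D * (S.b i0 / S.b (i0+1) - 1)) :=
      mul_le_mul_of_nonneg_left (mul_le_mul_of_nonneg_left h8 hD0) S.K_pos.le
    nlinarith [mul_le_mul_of_nonneg_right h9 hD0]
  have h11 : ∑ i ∈ Finset.Ico i0 n, |S.f w (S.b i) - S.f w (S.b (i+1))| ≤ |S.f w 0 - S.f w (S.b i0)| := by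
    by_cases hc : i0 ≤ n
    · rw [telescope hmono S.b_anti.antitone S.b_mem hc]
      have := incr_add hmono le_rfl (S.b_mem n).1 (S.b_anti.antitone hc) (S.b_mem i0).2
      rw [abs_sub_comm]
      linarith [abs_nonneg (S.f w 0 - S.f w (S.b n))]
    · rw [Finset.Ico_eq_empty (by omega), Finset.sum_empty]; exact abs_nonneg _
  have h12 : ∑ i ∈ Finset.Ico i0 n, |S.f w (S.b i) - S.f w (S.b (i+1))| ^ h ≤ nu n h * (η * |S.f w 0 - S.f w s| ^ h) := by
    refine (X.sum_le_nu (by simp) fun i _ => abs_nonneg _).trans ?_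
    refine mul_le_mul_of_nonneg_left ?_ (by linarith)
    refine (Real.rpow_le_rpow (Finset.sum_nonneg fun i _ => abs_nonneg _) (h11.trans h6) X.h0.le).trans ?_
    rw [Real.mul_rpow (by linarith) (abs_nonneg _)]
    exact mul_le_mul_of_nonneg_right (X.kappa_rpow hη) (Real.rpow_nonneg (abs_nonneg _) _)
  refine (mul_le_mul_of_nonneg_left h12 (by positivity)).trans_eq ?_
  ring

/-- U1 -/
theorem large_s {κ : ℝ} (hκ : 1 ≤ κ) {N : ℕ} (hN : ∀ k, N < k → ∀ w, W w → DistOn (S.f (w ++ [k])) (Icc 0 1) κ)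
    (hNn : N ≤ n) {A : ℝ} (hA : κ * S.H n h ≤ A) (h0 : S.P0 n h A) {w : List ℕ} (hw : VW n w) {s : ℝ} (hs : S.b N ≤ s) (hs1 : s ≤ 1) :
    (S.m n h).real (S.f w '' (S.J n ∩ Icc 0 s)) ≤
      (nu n h ^ 2 * (κ * S.H n h * (S.b N / S.K + (1 - h)) + A * (1 - S.b N / S.K + (1 - h)))) * |S.f w 0 - S.f w s| ^ h := by
  have hf := X.fin
  have hH := X.H_pos
  have hnu := X.one_le_nu
  have hP : 0 < κ * S.H n h := by positivity
  have hA0 : 0 ≤ A := by linarith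
  have hs0 : 0 < s := (S.b_pos N).trans_le hs
  have hsm : s ∈ Icc (0:ℝ) 1 := ⟨hs0.le, hs1⟩
  have h1 := X.P1_of_P0 hA0 h0
  have hmono := S.f_mono hw.W
  set L := |S.f w 0 - S.f w s| with hL
  have hL0 : 0 < L := abs_pos.2 (sub_ne_zero.2 fun e => hs0.ne (S.f_inj hw.W (by simp) hsm e))
  set Y := |S.f w 0 - S.f w (S.b N)| with hY
  set Z := |S.f w (S.b N) - S.f w s| with hZ
  have hYZ : Y + Z = L := incr_add hmono le_rfl (S.b_pos N).le hs hs1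
  have hY0 : 0 ≤ Y := abs_nonneg _
  have hZ0 : 0 ≤ Z := abs_nonneg _
  have hq : S.b N / S.K ≤ Y / L := by
    have := S.dist_K hw.W 0 (by simp) s hsm 0 (by simp) (S.b N) (S.b_mem N)
    rw [zero_sub, abs_neg, abs_of_pos (S.b_pos N), zero_sub, abs_neg, abs_of_pos hs0] at this
    rw [div_le_div_iff₀ S.K_pos hL0]
    have h2 : Y * s ≤ Y := mul_le_of_le_one_right hY0 hs1
    have := mul_le_mul_of_nonneg_left h2 S.K_pos.le
    nlinarith
  -- pieces above N
  have c1 : ∀ i ∈ Finset.Ico N n, (S.m n h).real (S.f (w ++ [i+1]) '' S.pc n 0 s i) ≤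
      κ * S.H n h * |S.f w (S.b i) - S.f w (S.b (i+1))| ^ h := by
    intro i hi
    have hi := Finset.mem_Ico.1 hi
    exact X.full hκ hN hw hi.2 hi.1 S.pc_sub
  have c2 : ∀ i ∈ Finset.Ico 0 N, (S.m n h).real (S.f (w ++ [i+1]) '' S.pc n 0 s i) ≤ (nu n h * A) * S.inc w 0 s i ^ h := by
    intro i hi
    have hi := Finset.mem_Ico.1 hi
    by_cases hne : (S.pc n 0 s i).Nonempty
    · exact X.pc_P1 h1 hw (by omega) hne (S.b_pos _).le
    · rw [not_nonempty_iff_eq_empty.1 hne, image_empty, measureReal_empty]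
      exact mul_nonneg (by positivity) (Real.rpow_nonneg (S.inc_nonneg _ _ _ _) _)
  have d1 : ∑ i ∈ Finset.Ico N n, |S.f w (S.b i) - S.f w (S.b (i+1))| ^ h ≤ nu n h * Y ^ h := by
    refine (X.sum_le_nu (by simp) fun i _ => abs_nonneg _).trans ?_
    refine mul_le_mul_of_nonneg_left ?_ (by linarith)
    refine Real.rpow_le_rpow (Finset.sum_nonneg fun i _ => abs_nonneg _) ?_ X.h0.le
    rw [telescope hmono S.b_anti.antitone S.b_mem hNn]
    have := incr_add hmono le_rfl (S.b_mem n).1 (S.b_anti.antitone hNn) (S.b_mem N).2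
    rw [abs_sub_comm]
    linarith [abs_nonneg (S.f w 0 - S.f w (S.b n))]
  have d2 : ∑ i ∈ Finset.Ico 0 N, S.inc w 0 s i ^ h ≤ nu n h * Z ^ h := by
    refine (X.sum_le_nu (by simpa using hNn) fun i _ => S.inc_nonneg _ _ _ _).trans ?_
    refine mul_le_mul_of_nonneg_left ?_ (by linarith)
    refine Real.rpow_le_rpow (Finset.sum_nonneg fun i _ => S.inc_nonneg _ _ _ _) ?_ X.h0.le
    unfold NonlinearIFS.inc
    rw [telescope hmono (S.tt_anti 0 s) (fun i => ⟨(S.tt_mem hs0.le i).1, (S.tt_mem hs0.le i).2.trans hs1⟩) (Nat.zero_le N)]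
    have e0 : S.tt 0 s 0 = s := by unfold tt; rw [S.b_zero, min_eq_right hs1, max_eq_right hs0.le]
    have e1 : S.tt 0 s N = S.b N := by unfold tt; rw [min_eq_left hs, max_eq_right (S.b_pos N).le]
    rw [e0, e1, abs_sub_comm]
  have hYh : Y ^ h ≤ L ^ h * (Y / L + (1 - h)) := by
    have := rpow_le_add (x := Y / L) (by positivity) X.h0 X.h1 ((div_le_one hL0).2 (by linarith))
    rw [Real.div_rpow hY0 hL0.le, div_le_iff₀ (by positivity)] at this
    linarith
  have hZh : Z ^ h ≤ L ^ h * (Z / L + (1 - h)) := by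
    have := rpow_le_add (x := Z / L) (by positivity) X.h0 X.h1 ((div_le_one hL0).2 (by linarith))
    rw [Real.div_rpow hZ0 hL0.le, div_le_iff₀ (by positivity)] at this
    linarith
  refine (X.m_pc w 0 s).trans ?_
  rw [← Finset.sum_Ico_consecutive _ (Nat.zero_le N) hNn]
  refine (add_le_add (Finset.sum_le_sum c2) (Finset.sum_le_sum c1)).trans ?_
  rw [← Finset.mul_sum, ← Finset.mul_sum]
  have hLh : 0 ≤ L ^ h := Real.rpow_nonneg hL0.le _
  have hδ : 0 ≤ 1 - h := by linarith [X.h1]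
  have hYL : 0 ≤ Y / L := by positivity
  have hZe : Z / L = 1 - Y / L := by
    have : Z = L - Y := by linarith
    rw [this, sub_div, div_self hL0.ne']
  rw [hZe] at hZh
  set y := Y / L with hy
  have hy1 : y ≤ 1 := (div_le_one hL0).2 (by linarith)
  have u1 : nu n h * A * ∑ i ∈ Finset.Ico 0 N, S.inc w 0 s i ^ h ≤ nu n h * A * (nu n h * (L ^ h * (1 - y + (1 - h)))) := by
    refine mul_le_mul_of_nonneg_left (d2.trans ?_) (by positivity)
    exact mul_le_mul_of_nonneg_left hZh (by linarith)
  have u2 : κ * S.H n h * ∑ i ∈ Finset.Ico N n, |S.f w (S.b i) - S.f w (S.b (i+1))| ^ h ≤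
      nu n h * (κ * S.H n h * (nu n h * (L ^ h * (y + (1 - h))))) := by
    have v : κ * S.H n h * ∑ i ∈ Finset.Ico N n, |S.f w (S.b i) - S.f w (S.b (i+1))| ^ h ≤ κ * S.H n h * (nu n h * (L ^ h * (y + (1 - h)))) := by
      refine mul_le_mul_of_nonneg_left (d1.trans ?_) hP.le
      exact mul_le_mul_of_nonneg_left hYh (by linarith)
    refine v.trans (le_mul_of_one_le_left ?_ hnu)
    have : 0 ≤ y + (1 - h) := by linarith
    positivity
  refine (add_le_add u1 u2).trans ?_
  have u3 : A * (1 - y + (1 - h)) + κ * S.H n h * (y + (1 - h)) ≤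
      κ * S.H n h * (S.b N / S.K + (1 - h)) + A * (1 - S.b N / S.K + (1 - h)) := by
    nlinarith [mul_nonneg (sub_nonneg.2 hA) (sub_nonneg.2 hq)]
  calc _ = (nu n h ^ 2 * (A * (1 - y + (1 - h)) + κ * S.H n h * (y + (1 - h)))) * L ^ h := by ring
    _ ≤ _ := by
      refine mul_le_mul_of_nonneg_right ?_ hLh
      exact mul_le_mul_of_nonneg_left u3 (by positivity)

end Ctx

end Part6

section Part7

open NonlinearIFS

namespace Ctx
variable {S : NonlinearIFS} {n : ℕ} {h : ℝ} (X : Ctx S n h)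
include X

theorem apriori : ∃ A, S.P0 n h A := by
  have hf := X.fin
  have hH := X.H_pos
  refine ⟨S.H n h * (S.K ^ 2 / S.b n) ^ h, ?_⟩
  intro w hw s hs
  have hK := S.K_pos
  have hb := S.b_pos n
  by_cases hsb : s < S.b n
  · have : S.J n ∩ Icc 0 s = ∅ := by
      ext x; simp only [mem_inter_iff, mem_empty_iff_false, iff_false]
      rintro ⟨hx, hx2⟩
      linarith [(S.J_sub hx).1, hx2.2]
    rw [this, image_empty, measureReal_empty]
    positivity
  push Not at hsb
  have h1 := X.m_upper hw hK.le (S.dist_K hw.W) (A := S.J n ∩ Icc 0 s) inter_subset_left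
  refine h1.trans ?_
  have h2 : (S.m n h).real (S.J n ∩ Icc 0 s) ≤ S.H n h := X.m_le_H _
  rw [mul_assoc, mul_comm]
  refine mul_le_mul h2 ?_ (Real.rpow_nonneg (mul_nonneg hK.le (S.len_nonneg _)) _) hH.le
  rw [← Real.mul_rpow (by positivity) (abs_nonneg _)]
  refine Real.rpow_le_rpow (mul_nonneg hK.le (S.len_nonneg _)) ?_ X.h0.le
  have h3 := S.dist_lower (S.dist_K hw.W) (x := 0) (y := s) (by simp) hs
  rw [zero_sub, abs_neg, abs_of_nonneg hs.1] at h3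
  have h4 : S.len w * S.b n ≤ S.K * |S.f w 0 - S.f w s| :=
    (mul_le_mul_of_nonneg_left hsb (S.len_nonneg _)).trans h3
  rw [div_mul_eq_mul_div, le_div_iff₀ hb]
  nlinarith

/-- the constant -/
theorem P0_final {κ η : ℝ} (hκ : 1 ≤ κ) (hη : 1 ≤ η) {N : ℕ} (hN : ∀ k, N < k → ∀ w, W w → DistOn (S.f (w ++ [k])) (Icc 0 1) κ)
    (hr : ∀ i, N ≤ i → 1 + S.K * (S.b i / S.b (i+1) - 1) ≤ η) (hNn : N ≤ n)
    (hD : 0 < 1 - nu n h ^ 2 * (1 - S.b N / S.K + (1 - h))) :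
    S.P0 n h (max (κ * nu n h * η) (nu n h ^ 2 * (κ * (S.b N / S.K + (1 - h))) / (1 - nu n h ^ 2 * (1 - S.b N / S.K + (1 - h)))) * S.H n h) := by
  have hf := X.fin
  have hH := X.H_pos
  have hnu := X.one_le_nu
  have hpos : ∀ w, VW n w → ∀ s, 0 < s → s ≤ 1 → 0 < |S.f w 0 - S.f w s| ^ h := by
    intro w hw s hs hs1
    refine Real.rpow_pos_of_pos (abs_pos.2 (sub_ne_zero.2 fun e => hs.ne (S.f_inj hw.W (by simp) ⟨hs.le, hs1⟩ e))) _
  have hzero : ∀ w : List ℕ, (S.m n h).real (S.f w '' (S.J n ∩ Icc 0 0)) = 0 := by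
    intro w
    have : S.J n ∩ Icc (0:ℝ) 0 = ∅ := by
      ext x; simp only [mem_inter_iff, mem_empty_iff_false, iff_false]
      rintro ⟨hx, hx2⟩
      linarith [S.J_pos hx, hx2.2]
    rw [this, image_empty, measureReal_empty]
  let T : Set ℝ := {r | ∃ w s, VW n w ∧ 0 < s ∧ s ≤ 1 ∧ r = (S.m n h).real (S.f w '' (S.J n ∩ Icc 0 s)) / |S.f w 0 - S.f w s| ^ h}
  have hiff : ∀ A, S.P0 n h A ↔ A ∈ upperBounds T := by
    intro A
    constructor
    · rintro hP _ ⟨w, s, hw, hs, hs1, rfl⟩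
      rw [div_le_iff₀ (hpos w hw s hs hs1)]
      exact hP w hw s ⟨hs.le, hs1⟩
    · intro hA w hw s hs
      rcases hs.1.eq_or_lt with h0 | h0
      · rw [← h0, hzero, sub_self, abs_zero, Real.zero_rpow X.h0.ne', mul_zero]
      · rw [← div_le_iff₀ (hpos w hw s h0 hs.2)]
        exact hA ⟨w, s, hw, h0, hs.2, rfl⟩
  have hTne : T.Nonempty := ⟨_, [], 1, VW.nil n, one_pos, le_rfl, rfl⟩
  obtain ⟨A1, hA1⟩ := X.apriori
  have hTb : BddAbove T := ⟨A1, (hiff A1).1 hA1⟩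
  set A := sSup T with hA
  have hPA : S.P0 n h A := (hiff A).2 fun x hx => le_csSup hTb hx
  suffices hle : A ≤ max (κ * nu n h * η) (nu n h ^ 2 * (κ * (S.b N / S.K + (1 - h))) / (1 - nu n h ^ 2 * (1 - S.b N / S.K + (1 - h)))) * S.H n h from
    (hiff _).2 fun x hx => (le_csSup hTb hx).trans hle
  rw [max_mul_of_nonneg _ _ hH.le]
  by_cases hc : A ≤ κ * nu n h * η * S.H n h
  · exact hc.trans (le_max_left _ _)
  push Not at hc
  refine le_trans ?_ (le_max_right _ _)
  have hκA : κ * S.H n h ≤ A := by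
    refine le_trans ?_ hc.le
    refine mul_le_mul_of_nonneg_right ?_ hH.le
    rw [mul_assoc]
    exact le_mul_of_one_le_right (by linarith) (by nlinarith)
  set St := nu n h ^ 2 * (κ * S.H n h * (S.b N / S.K + (1 - h)) + A * (1 - S.b N / S.K + (1 - h))) with hSt
  have hub : A ≤ max (κ * nu n h * η * S.H n h) St := by
    refine csSup_le hTne ?_
    rintro _ ⟨w, s, hw, hs, hs1, rfl⟩
    rw [div_le_iff₀ (hpos w hw s hs hs1)]
    by_cases hsN : s < S.b N
    · exact (X.small_s hκ hη hN hr hw hs hsN).trans (mul_le_mul_of_nonneg_right (le_max_left _ _) (hpos w hw s hs hs1).le)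
    · exact (X.large_s hκ hN hNn hκA hPA hw (not_lt.1 hsN) hs1).trans
        (mul_le_mul_of_nonneg_right (le_max_right _ _) (hpos w hw s hs hs1).le)
  have hASt : A ≤ St := by
    rcases le_max_iff.1 hub with h | h
    · exact absurd h (not_le.2 hc)
    · exact h
  rw [div_mul_eq_mul_div, le_div_iff₀ hD]
  rw [hSt] at hASt
  nlinarith

theorem all_intervals {A : ℝ} (hA : 0 ≤ A) (h0 : S.P0 n h A) (h1 : S.P1 n h A) (M : ℕ) :
    ∀ w, VW n w → ∀ p q, 0 ≤ p → q ≤ 1 → S.α ^ M < q - p →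
      (S.m n h).real (S.f w '' (S.J n ∩ Icc p q)) ≤ nu n h * A * |S.f w p - S.f w q| ^ h := by
  have hf := X.fin
  have hnu := X.one_le_nu
  induction M with
  | zero => intro w hw p q hp hq hlt; rw [pow_zero] at hlt; linarith
  | succ M ih =>
    intro w hw p q hp hq hlt
    have hα := S.α_pos
    have hpq : p < q := by have := pow_pos hα (M+1); linarith
    by_cases hc : ∃ i, i < n ∧ S.b (i+1) ≤ p ∧ q ≤ S.b i
    · obtain ⟨i, hi, hbp, hbq⟩ := hc
      have im := S.g_image (i+1) (by omega)
      simp only [Nat.add_sub_cancel] at im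
      have m1 : q ∈ S.g (i+1) '' Icc 0 1 := by rw [im]; exact ⟨by linarith, hbq⟩
      have m2 : p ∈ S.g (i+1) '' Icc 0 1 := by rw [im]; exact ⟨hbp, by linarith⟩
      obtain ⟨y1, hy1, f1⟩ := m1
      obtain ⟨y2, hy2, f2⟩ := m2
      have ga := S.g_anti (i+1) (by omega)
      have hy : y1 < y2 := by rw [← ga.lt_iff_gt hy2 hy1, f1, f2]; exact hpq
      have hlip := S.g_lip (k := i+1) (by omega) hy1 hy2
      rw [f1, f2, abs_of_pos (by linarith), abs_of_neg (by linarith)] at hlip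
      have hlt' : S.α ^ M < y2 - y1 := by
        rw [pow_succ] at hlt
        nlinarith
      have := ih (w ++ [i+1]) (hw.snoc (by omega) (by omega)) y1 y2 hy1.1 hy2.2 hlt'
      rw [S.f_snoc, S.f_snoc, f1, f2, abs_sub_comm] at this
      refine le_trans (measureReal_mono ?_ (measure_ne_top _ _)) this
      rintro _ ⟨x, ⟨hx, hxpq⟩, rfl⟩
      obtain ⟨k, k1, k2, z, hz, rfl⟩ := S.J_self hx
      have hI := S.g_J_Ioo k1 hz
      have e1 : S.b k < S.b i := hI.1.trans_le (hxpq.2.trans hbq)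
      have e2 : S.b (i+1) < S.b (k-1) := (hbp.trans hxpq.1).trans_lt hI.2
      have e1 := S.b_anti.lt_iff_gt.1 e1
      have e2 := S.b_anti.lt_iff_gt.1 e2
      have hk : k = i + 1 := by omega
      subst hk
      refine ⟨z, ⟨hz, ?_, ?_⟩, S.f_snoc _ _ _⟩
      · rw [← ga.le_iff_ge (S.J_sub01 hz) hy1, f1]; exact hxpq.2
      · rw [← ga.le_iff_ge hy2 (S.J_sub01 hz), f2]; exact hxpq.1
    · push Not at hc
      refine X.sum_pc hw hp hpq.le hq hA fun i hi => ?_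
      have hi := (Finset.mem_Ico.1 hi).2
      by_cases hne : (S.pc n p q i).Nonempty
      · by_cases hb : p ≤ S.b (i+1)
        · exact X.pc_P1 h1 hw hi hne hb
        · exact X.pc_P0 h0 hw hi hne (hc i hi (not_le.1 hb).le).le
      · rw [not_nonempty_iff_eq_empty.1 hne, image_empty, measureReal_empty]
        exact mul_nonneg hA (Real.rpow_nonneg (S.inc_nonneg _ _ _ _) _)

theorem interval_bound {A : ℝ} (hA : 0 ≤ A) (h0 : S.P0 n h A) (h1 : S.P1 n h A) {p q : ℝ} (hp : 0 ≤ p) (hpq : p ≤ q) (hq : q ≤ 1) :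
    (S.m n h).real (S.J n ∩ Icc p q) ≤ nu n h * A * (q - p) ^ h := by
  have hf := X.fin
  rcases hpq.eq_or_lt with rfl | hlt
  · have : NullSingletonClass (S.m n h) := by
      have : NullSingletonClass (μH[h] : Measure ℝ) := Measure.nullSingletonClass_hausdorff ℝ X.h0
      unfold NonlinearIFS.m; infer_instance
    have hz : (S.m n h).real (S.J n ∩ Icc p p) ≤ 0 := by
      rw [Icc_self]
      refine (measureReal_mono inter_subset_right (measure_ne_top _ _)).trans ?_
      simp [measureReal_def]
    rw [sub_self, Real.zero_rpow X.h0.ne', mul_zero]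
    exact hz
  · obtain ⟨M, hM⟩ := exists_pow_lt_of_lt_one (sub_pos.2 hlt) S.α_lt
    have := X.all_intervals hA h0 h1 M [] (VW.nil n) p q hp hq hM
    have e : S.f [] = id := rfl
    rw [e, image_id, id, id, abs_of_neg (by linarith), neg_sub] at this
    exact this

theorem one_le_of_bound {B : ℝ} (hB : 0 < B) (hb : ∀ p q, 0 ≤ p → p ≤ q → q ≤ 1 → (S.m n h).real (S.J n ∩ Icc p q) ≤ B * (q - p) ^ h) :
    1 ≤ B := by
  have hf := X.fin
  have hH := X.H_pos
  have key : ∀ E : Set ℝ, S.m n h E ≤ ENNReal.ofReal B * Metric.ediam E ^ h := by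
    intro E
    have e : S.m n h E = S.m n h (S.J n ∩ E) := by
      rw [NonlinearIFS.m, Measure.restrict_apply' (S.J_compact n).measurableSet,
        Measure.restrict_apply' (S.J_compact n).measurableSet, inter_comm (S.J n), inter_assoc, inter_self]
    rw [e]
    rcases (S.J n ∩ E).eq_empty_or_nonempty with he | hne
    · rw [he, measure_empty]; exact zero_le
    have hbd : Bornology.IsBounded (S.J n ∩ E) := (S.J_compact n).isBounded.subset inter_subset_left
    have hbb := isBounded_iff_bddBelow_bddAbove.1 hbd
    set p := sInf (S.J n ∩ E)
    set q := sSup (S.J n ∩ E)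
    have hsub : S.J n ∩ E ⊆ S.J n ∩ Icc p q := fun x hx => ⟨hx.1, csInf_le hbb.1 hx, le_csSup hbb.2 hx⟩
    have hp : 0 ≤ p := le_csInf hne fun x hx => (S.J_sub01 hx.1).1
    have hq : q ≤ 1 := csSup_le hne fun x hx => (S.J_sub01 hx.1).2
    have hpq : p ≤ q := by obtain ⟨x, hx⟩ := hne; exact (hsub hx).2.1.trans (hsub hx).2.2
    have h1 := hb p q hp hpq hq
    calc S.m n h (S.J n ∩ E) ≤ S.m n h (S.J n ∩ Icc p q) := measure_mono hsub
      _ = ENNReal.ofReal ((S.m n h).real (S.J n ∩ Icc p q)) := by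
          rw [measureReal_def, ENNReal.ofReal_toReal (measure_ne_top _ _)]
      _ ≤ ENNReal.ofReal (B * (q - p) ^ h) := ENNReal.ofReal_le_ofReal h1
      _ = ENNReal.ofReal B * Metric.ediam (S.J n ∩ E) ^ h := by
          rw [ENNReal.ofReal_mul hB.le, ← ENNReal.ofReal_rpow_of_nonneg (sub_nonneg.2 hpq) X.h0.le, Real.ediam_eq hbd]
      _ ≤ _ := by
          gcongr
          · exact X.h0.le
          · exact inter_subset_right
  have hBt : ENNReal.ofReal B ≠ 0 := (ENNReal.ofReal_pos.2 hB).ne'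
  have := Measure.le_hausdorffMeasure h ((ENNReal.ofReal B)⁻¹ • S.m n h) 1 one_pos (fun E _ => by
    rw [Measure.smul_apply, smul_eq_mul, ENNReal.inv_mul_le_iff hBt ENNReal.ofReal_ne_top]
    exact key E)
  have h2 := this (S.J n)
  rw [Measure.smul_apply, smul_eq_mul, ENNReal.inv_mul_le_iff hBt ENNReal.ofReal_ne_top, X.m_sub subset_rfl, ← X.ofReal_H,
    ← ENNReal.ofReal_mul hB.le, ENNReal.ofReal_le_ofReal_iff (by positivity)] at h2
  by_contra hc
  push Not at hc
  nlinarith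

theorem lower {κ η : ℝ} (hκ : 1 ≤ κ) (hη : 1 ≤ η) {N : ℕ} (hN : ∀ k, N < k → ∀ w, W w → DistOn (S.f (w ++ [k])) (Icc 0 1) κ)
    (hr : ∀ i, N ≤ i → 1 + S.K * (S.b i / S.b (i+1) - 1) ≤ η) (hNn : N ≤ n)
    (hD : 0 < 1 - nu n h ^ 2 * (1 - S.b N / S.K + (1 - h))) :
    1 ≤ nu n h ^ 2 * max (κ * nu n h * η) (nu n h ^ 2 * (κ * (S.b N / S.K + (1 - h))) / (1 - nu n h ^ 2 * (1 - S.b N / S.K + (1 - h)))) * S.H n h := by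
  have hH := X.H_pos
  have hnu := X.one_le_nu
  have h0 := X.P0_final hκ hη hN hr hNn hD
  set Q := max (κ * nu n h * η) (nu n h ^ 2 * (κ * (S.b N / S.K + (1 - h))) / (1 - nu n h ^ 2 * (1 - S.b N / S.K + (1 - h))))
  have hQ : 0 < Q := lt_of_lt_of_le (by positivity) (le_max_left _ _)
  have hA : 0 ≤ Q * S.H n h := by positivity
  have h1 := X.P1_of_P0 hA h0
  have h0' : S.P0 n h (nu n h * (Q * S.H n h)) := fun w hw s hs =>
    (h0 w hw s hs).trans (mul_le_mul_of_nonneg_right (le_mul_of_one_le_left hA hnu) (Real.rpow_nonneg (abs_nonneg _) _))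
  have := X.one_le_of_bound (B := nu n h * (nu n h * (Q * S.H n h))) (by positivity)
    fun p q hp hpq hq => X.interval_bound (by positivity) h0' h1 hp hpq hq
  refine this.trans_eq (by ring)

end Ctx

end Part7

namespace NonlinearIFS
variable (S : NonlinearIFS)

theorem h_tendsto : Tendsto S.h atTop (𝓝 1) := by
  have hlog : Tendsto (fun n : ℕ => Real.log n) atTop atTop := Real.tendsto_log_atTop.comp tendsto_natCast_atTop_atTop
  have h1 : Tendsto (fun n : ℕ => (1 - S.h n) * Real.log n * (Real.log n)⁻¹) atTop (𝓝 (0 * 0)) :=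
    S.N1.mul (tendsto_inv_atTop_zero.comp hlog)
  have h2 : Tendsto (fun n : ℕ => 1 - S.h n) atTop (𝓝 (0 * 0)) := by
    refine h1.congr' ?_
    filter_upwards [hlog.eventually_gt_atTop 0] with n hn
    rw [mul_assoc, mul_inv_cancel₀ hn.ne', mul_one]
  have h3 := (tendsto_const_nhds (x := (1:ℝ))).sub h2
  simpa using h3

theorem nu_tendsto : Tendsto (fun n => nu n (S.h n)) atTop (𝓝 1) := by
  have h1 := (Real.continuous_exp.tendsto 0).comp S.N1
  rw [Real.exp_zero] at h1
  refine h1.congr' ?_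
  filter_upwards [eventually_gt_atTop 0] with n hn
  have : (0:ℝ) < n := by exact_mod_cast hn
  simp only [Function.comp, nu]
  rw [Real.rpow_def_of_pos this, mul_comm]

theorem ctx : ∀ᶠ n in atTop, Ctx S n (S.h n) := by
  filter_upwards [eventually_ge_atTop 2, S.h_tendsto.eventually_const_lt (show (0:ℝ) < 1 by norm_num)] with n hn h0
  have hd := S.h_dim n (by omega)
  refine ⟨hn, h0, ?_, hd⟩
  have h1 : dimH (limitSet S.g n) ≤ dimH (univ : Set ℝ) := dimH_mono (subset_univ _)
  rw [hd, Real.dimH_univ] at h1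
  have := ENNReal.ofReal_le_one.1 h1
  exact this

theorem ev_upper {ε : ℝ} (hε : 1 < ε) : ∀ᶠ n in atTop, S.H n (S.h n) < ε := by
  obtain ⟨κ, hκ1, hκ2⟩ := exists_between hε
  obtain ⟨N, hN⟩ := S.dist_large hκ1
  have hθ : Tendsto (fun n => 1 - S.K ^ 2 * S.b n / S.b N) atTop (𝓝 (1 - S.K ^ 2 * 0 / S.b N)) :=
    tendsto_const_nhds.sub ((tendsto_const_nhds.mul S.b_lim).div_const _)
  rw [mul_zero, zero_div, sub_zero] at hθ
  have hq : Tendsto (fun n => κ / (1 - S.K ^ 2 * S.b n / S.b N)) atTop (𝓝 (κ / 1)) :=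
    tendsto_const_nhds.div hθ one_ne_zero
  rw [div_one] at hq
  filter_upwards [S.ctx, hθ.eventually_const_lt (show (0:ℝ) < 1 by norm_num), hq.eventually_lt_const hκ2,
    eventually_ge_atTop N] with n X h1 h2 h3
  exact (X.upper hκ1.le hN h3 h1).trans_lt h2

theorem ev_lower {e : ℝ} (he : e < 1) : ∀ᶠ n in atTop, e < S.H n (S.h n) := by
  obtain ⟨κ, hκe, hκ1⟩ : ∃ κ : ℝ, κ * κ * e < 1 ∧ 1 < κ := by
    have hc : ContinuousAt (fun κ : ℝ => κ * κ * e) 1 := by fun_prop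
    have := hc.eventually_lt_const (u := 1) (by simpa using he)
    obtain ⟨κ, h1, h2⟩ := ((this.filter_mono (nhdsWithin_le_nhds (s := Ioi 1))).and self_mem_nhdsWithin).exists
    exact ⟨κ, h1, h2⟩
  obtain ⟨N1, hN1⟩ := S.dist_large hκ1
  have hK := S.K_pos
  obtain ⟨N2, hN2⟩ := S.ratio_large (η := 1 + (κ - 1) / S.K) (by
    have : 0 < (κ - 1) / S.K := div_pos (by linarith) hK
    linarith)
  set N := max N1 N2
  have hN : ∀ k, N < k → ∀ w, W w → DistOn (S.f (w ++ [k])) (Icc 0 1) κ := fun k hk =>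
    hN1 k ((le_max_left _ _).trans_lt hk)
  have hr : ∀ i, N ≤ i → 1 + S.K * (S.b i / S.b (i+1) - 1) ≤ κ := by
    intro i hi
    have h1 := hN2 i ((le_max_right _ _).trans hi)
    have h2 : S.K * (S.b i / S.b (i+1) - 1) ≤ S.K * ((κ - 1) / S.K) :=
      mul_le_mul_of_nonneg_left (by linarith) hK.le
    rw [mul_div_cancel₀ _ hK.ne'] at h2
    linarith
  set q := S.b N / S.K with hq
  have hq0 : 0 < q := div_pos (S.b_pos N) hK
  have hδ : Tendsto (fun n => 1 - S.h n) atTop (𝓝 (1 - 1)) := tendsto_const_nhds.sub S.h_tendsto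
  have hν2 : Tendsto (fun n => nu n (S.h n) ^ 2) atTop (𝓝 (1 ^ 2)) := S.nu_tendsto.pow 2
  have hD : Tendsto (fun n => 1 - nu n (S.h n) ^ 2 * (1 - q + (1 - S.h n))) atTop (𝓝 (1 - 1 ^ 2 * (1 - q + (1 - 1)))) :=
    tendsto_const_nhds.sub (hν2.mul (tendsto_const_nhds.add hδ))
  have eD : 1 - 1 ^ 2 * (1 - q + (1 - 1)) = q := by ring
  rw [eD] at hD
  have hQ : Tendsto (fun n => nu n (S.h n) ^ 2 * max (κ * nu n (S.h n) * κ)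
      (nu n (S.h n) ^ 2 * (κ * (q + (1 - S.h n))) / (1 - nu n (S.h n) ^ 2 * (1 - q + (1 - S.h n))))) atTop
      (𝓝 (1 ^ 2 * max (κ * 1 * κ) (1 ^ 2 * (κ * (q + (1 - 1))) / q))) := by
    refine hν2.mul (Tendsto.max ((tendsto_const_nhds.mul S.nu_tendsto).mul tendsto_const_nhds) ?_)
    exact (hν2.mul (tendsto_const_nhds.mul (tendsto_const_nhds.add hδ))).div hD hq0.ne'
  have eQ : 1 ^ 2 * max (κ * 1 * κ) (1 ^ 2 * (κ * (q + (1 - 1))) / q) = κ * κ := by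
    have : 1 ^ 2 * (κ * (q + (1 - 1))) / q = κ := by field_simp; ring
    rw [this, max_eq_left (by nlinarith)]; ring
  rw [eQ] at hQ
  filter_upwards [S.ctx, hD.eventually_const_lt hq0, (hQ.mul_const e).eventually_lt_const hκe,
    hQ.eventually_const_lt (show (0:ℝ) < κ * κ by nlinarith), eventually_ge_atTop N] with n X h1 h2 h3 h4
  have := X.lower hκ1.le hκ1.le hN hr h4 h1
  exact lt_of_mul_lt_mul_left (h2.trans_le this) h3.le

end NonlinearIFS

/-- In the nonlinear setting, `lim_{n→∞} H_{h_n}(J_n) = 1`. -/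
theorem nonlinear_hausdorff_measure_tendsto_one (S : NonlinearIFS) :
    Filter.Tendsto (fun n : ℕ => μH[S.h n] (limitSet S.g n)) Filter.atTop (nhds 1) := by
  have h1 : Tendsto (fun n => S.H n (S.h n)) atTop (𝓝 1) := by
    rw [tendsto_order]
    exact ⟨fun e he => S.ev_lower he, fun e he => S.ev_upper he⟩
  have h2 := (ENNReal.continuous_ofReal.tendsto 1).comp h1
  rw [ENNReal.ofReal_one] at h2
  refine h2.congr' ?_
  filter_upwards [S.ctx] with n X
  exact X.ofReal_H
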